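/- arXiv:2003.03656 — 4 statements merged into one kernel-verified Lean document; each statement's English description precedes it below -/
import Mathlib

section
/- There exists an absolute constant c > 0 such that for every δ > 0 there exists a constant C = C(δ) > 0 with the following property: for every prime power q and every integer k with 3 ≤ k ≤ q^{1/2}/(1+δ), one has binom(q², k) · exp(−C k³/q) ≤ A(q,k) ≤ binom(q², k) · exp(−c k³/q). -/
/-!
The proof counts the ways of extending an arc by one point. Let `q = |F|`, and let `s` be an arc
of size `k`. A point `x ∉ s` fails to extend `s` exactly when it lies on one of the `m = k.choose 2`
secants of `s`. Each secant has `q - 2` points outside `s`, and two distinct secants share at most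
one point; hence the number of bad points is at most `m (q - 2)`, and at least
`m (q - 2 - (m - 1))`, counting only points on a single secant (`bad_card_le`, `le_bad_card`).
When `(k + 1) ^ 2 ≤ q` this is between `m q / 2` and `m (q - 2)`, so that the number of good points
is between `(q² - k) (1 - m / q)` and `(q² - k) (1 - m / (2 q))`.

Counting pairs (arc, point extending it) gives `(k + 1) A(q, k + 1) = ∑ ext(s)` (`arcs_succ`), while
`(k + 1) choose(q², k + 1) = (q² - k) choose(q², k)`. Hence the ratio `A(q, k) / choose(q², k)`
is multiplied at each step by a factor between `exp (-2 m / q)` and `exp (-m / (2 q))`, and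
summing `k.choose 2` over the steps gives `k.choose 3`, which is of order `k³`
(`arcs_bounds`). The resulting constants are `c = 1 / 54` and `C = 1`.
-/


open Finset MeasureTheory
open scoped NNReal ENNReal

/-- A set `P` in the affine plane over `F` is an arc if it contains no three
distinct collinear points. -/
def IsArc (F : Type*) [Field F] (P : Set (F × F)) : Prop :=
  ∀ a ∈ P, ∀ b ∈ P, ∀ c ∈ P,
    a ≠ b → a ≠ c → b ≠ c → ¬ Collinear F ({a, b, c} : Set (F × F))

/-- `numArcs F k` is the number of `k`-element arcs in `F²`. -/
noncomputable def numArcs (F : Type*) [Field F] [Fintype F] (k : ℕ) : ℕ :=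
  Nat.card {s : Finset (F × F) // s.card = k ∧ IsArc F ↑s}

/-- `maxArc F P` is the maximum cardinality of an arc contained in `P`. -/
noncomputable def maxArc (F : Type*) [Field F] (P : Finset (F × F)) : ℕ :=
  sSup {k : ℕ | ∃ s : Finset (F × F), s ⊆ P ∧ s.card = k ∧ IsArc F ↑s}

/-- `numCollinearTriples F P` is the number of 3-element collinear subsets of `P`. -/
noncomputable def numCollinearTriples (F : Type*) [Field F] (P : Finset (F × F)) : ℕ :=
  Nat.card {s : Finset (F × F) // s ⊆ P ∧ s.card = 3 ∧ Collinear F (↑s : Set (F × F))}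

/-- `P` contains no `l` distinct collinear points. -/
def NoLCollinear (F : Type*) [Field F] (l : ℕ) (P : Finset (F × F)) : Prop :=
  ∀ s : Finset (F × F), s ⊆ P → s.card = l → ¬ Collinear F (↑s : Set (F × F))

/-- The product Bernoulli(p) measure on subsets of `F²` (encoded as functions
`F × F → Bool`): each point is included independently with probability `p`. -/
noncomputable def randomMeasure (F : Type*) [Field F] [Fintype F] (p : ℝ≥0) (hp : p ≤ 1) :
    Measure ((F × F) → Bool) :=
  Measure.pi fun _ => (PMF.bernoulli p (by exact_mod_cast hp)).toMeasure

/-- The subset of `F²` corresponding to an indicator function `Q : F × F → Bool`. -/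
noncomputable def toSubset {F : Type*} [Field F] [Fintype F] (Q : (F × F) → Bool) :
    Finset (F × F) := Finset.univ.filter fun x => Q x = true

/-- `L` is an affine line in `F²`, i.e. the affine span of two distinct points. -/
def IsAffineLine (F : Type*) [Field F] (L : Set (F × F)) : Prop :=
  ∃ a b : F × F, a ≠ b ∧ L = (affineSpan F {a, b} : Set (F × F))

open Classical in
/-- The finset of `k`-element arcs in `F²`. -/
noncomputable def arcs (F : Type*) [Field F] [Fintype F] (k : ℕ) : Finset (Finset (F × F)) :=
  univ.filter fun s => s.card = k ∧ IsArc F (s : Set (F × F))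

lemma numArcs_eq (F : Type*) [Field F] [Fintype F] (k : ℕ) : numArcs F k = (arcs F k).card := by
  classical
  unfold numArcs arcs
  rw [Nat.card_eq_fintype_card, Fintype.card_subtype]

open Classical in
/-- The points outside `s` whose addition to `s` gives an arc. -/
noncomputable def good {F : Type*} [Field F] [Fintype F] (s : Finset (F × F)) : Finset (F × F) :=
  sᶜ.filter fun x => IsArc F (↑(insert x s) : Set (F × F))

open Classical in
/-- The points outside `s` whose addition to `s` does not give an arc. -/
noncomputable def bad {F : Type*} [Field F] [Fintype F] (s : Finset (F × F)) : Finset (F × F) :=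
  sᶜ.filter fun x => ¬ IsArc F (↑(insert x s) : Set (F × F))

open Classical in
/-- The points outside `s` on the affine span of `e`; used when `e` is a pair of points of `s`. -/
noncomputable def secant {F : Type*} [Field F] [Fintype F] (s e : Finset (F × F)) :
    Finset (F × F) :=
  sᶜ.filter fun x => x ∈ affineSpan F (e : Set (F × F))

lemma good_add_bad {F : Type*} [Field F] [Fintype F] (s : Finset (F × F)) :
    (good s).card + (bad s).card + s.card = Fintype.card F ^ 2 := by
  classical
  unfold good bad
  rw [card_filter_add_card_filter_not, card_compl_add_card, Fintype.card_prod, sq]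

lemma IsArc.mono {F : Type*} [Field F] {s t : Set (F × F)} (h : IsArc F t) (hst : s ⊆ t) :
    IsArc F s := fun a ha b hb c hc => h a (hst ha) b (hst hb) c (hst hc)

/-- Double counting of pairs (arc, point of the arc) against pairs (arc, extending point). -/
lemma arcs_succ (F : Type*) [Field F] [Fintype F] (k : ℕ) :
    (k + 1) * (arcs F (k + 1)).card = ∑ s ∈ arcs F k, (good s).card := by
  classical
  have h1 : (k + 1) * (arcs F (k + 1)).card = ∑ t ∈ arcs F (k + 1), t.card := by
    rw [sum_congr rfl (g := fun _ => k + 1), sum_const, smul_eq_mul, mul_comm]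
    intro t ht
    exact (mem_filter.1 ht).2.1
  rw [h1, ← card_sigma, ← card_sigma]
  refine card_nbij' (fun p => ⟨p.1.erase p.2, p.2⟩) (fun p => ⟨insert p.2 p.1, p.2⟩) ?_ ?_ ?_ ?_
  · rintro ⟨t, x⟩ h
    simp only [coe_sigma, Set.mem_sigma_iff, mem_coe, arcs, good, mem_filter, mem_univ,
      true_and] at h ⊢
    obtain ⟨⟨hc, ha⟩, hx⟩ := h
    refine ⟨⟨by rw [card_erase_of_mem hx, hc]; rfl, ha.mono (by simp)⟩, by simp, ?_⟩
    rwa [insert_erase hx]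
  · rintro ⟨s, x⟩ h
    simp only [coe_sigma, Set.mem_sigma_iff, mem_coe, arcs, good, mem_filter, mem_univ,
      true_and, mem_compl] at h ⊢
    obtain ⟨⟨hc, ha⟩, hx, hi⟩ := h
    exact ⟨⟨by rw [card_insert_of_notMem hx, hc], hi⟩, mem_insert_self _ _⟩
  · rintro ⟨t, x⟩ h
    simp only [coe_sigma, Set.mem_sigma_iff, mem_coe] at h
    simp [insert_erase h.2]
  · rintro ⟨s, x⟩ h
    simp only [coe_sigma, Set.mem_sigma_iff, mem_coe, good, mem_filter, mem_compl] at h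
    simp [erase_insert h.2.1]

/-- In an arc, the line through two points contains no further point of the arc. -/
lemma IsArc.notMem_line {F : Type*} [Field F] {s : Set (F × F)} (hs : IsArc F s) {a b c : F × F}
    (ha : a ∈ s) (hb : b ∈ s) (hc : c ∈ s) (hab : a ≠ b) (hca : c ≠ a) (hcb : c ≠ b) :
    c ∉ affineSpan F ({a, b} : Set (F × F)) := fun h =>
  hs c hc a ha b hb hca hcb hab (collinear_insert_of_mem_affineSpan_pair h)

lemma bad_eq {F : Type*} [Field F] [Fintype F] {s : Finset (F × F)}
    (hs : IsArc F (s : Set (F × F))) [DecidableEq (F × F)] :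
    bad s = (s.powersetCard 2).biUnion (secant s) := by
  ext x
  simp only [bad, secant, mem_filter, mem_compl, mem_biUnion, mem_powersetCard]
  constructor
  · rintro ⟨hx, h⟩
    -- It suffices to find two points of `s` whose line passes through `x`.
    have key : ∀ a ∈ s, ∀ b ∈ s, a ≠ b → Collinear F ({x, a, b} : Set (F × F)) →
        ∃ e : Finset (F × F), (e ⊆ s ∧ e.card = 2) ∧ x ∉ s ∧
          x ∈ affineSpan F (e : Set (F × F)) := by
      intro a ha b hb hab hcol
      refine ⟨{a, b}, ⟨by simp [insert_subset_iff, ha, hb], card_pair hab⟩, hx, ?_⟩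
      rw [coe_pair]
      exact hcol.mem_affineSpan_of_mem_of_ne (by simp) (by simp) (by simp) hab
    unfold IsArc at h
    push Not at h
    obtain ⟨a, ha, b, hb, c, hc, hab, hac, hbc, hcol⟩ := h
    simp only [coe_insert, Set.mem_insert_iff, mem_coe] at ha hb hc
    rcases ha with rfl | ha
    · exact key b (hb.resolve_left hab.symm) c (hc.resolve_left hac.symm) hbc hcol
    rcases hb with rfl | hb
    · exact key a ha c (hc.resolve_left hbc.symm) hac (by rwa [Set.insert_comm])
    rcases hc with rfl | hc
    · refine key a ha b hb hab ?_
      rwa [Set.insert_comm, Set.pair_comm c b]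
    · exact (hs a ha b hb c hc hab hac hbc hcol).elim
  · rintro ⟨e, ⟨hes, he⟩, hx, hxe⟩
    refine ⟨hx, fun h => ?_⟩
    obtain ⟨a, b, hab, rfl⟩ := card_eq_two.1 he
    have ha : a ∈ s := hes (by simp)
    have hb : b ∈ s := hes (by simp)
    rw [coe_pair] at hxe
    exact h.notMem_line (a := a) (b := b) (c := x) (by simp [ha]) (by simp [hb]) (by simp) hab
      (fun h => hx (h ▸ ha)) (fun h => hx (h ▸ hb)) hxe

lemma card_secant {F : Type*} [Field F] [Fintype F] {s e : Finset (F × F)}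
    (hs : IsArc F (s : Set (F × F))) (hes : e ⊆ s) (he : e.card = 2) :
    (secant s e).card = Fintype.card F - 2 := by
  classical
  obtain ⟨a, b, hab, rfl⟩ := card_eq_two.1 he
  have ha : a ∈ s := hes (by simp)
  have hb : b ∈ s := hes (by simp)
  have hline : (univ.image (AffineMap.lineMap a b : F → F × F)).card = Fintype.card F := by
    rw [card_image_of_injective _ (AffineMap.lineMap_injective F hab), card_univ]
  have : secant s {a, b} = univ.image (AffineMap.lineMap a b : F → F × F) \ {a, b} := by
    ext x
    have hmem : x ∈ univ.image (AffineMap.lineMap a b : F → F × F) ↔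
        x ∈ affineSpan F ({a, b} : Set (F × F)) := by
      simp [mem_affineSpan_pair_iff_exists_lineMap_eq]
    rw [mem_sdiff, hmem]
    simp only [secant, mem_filter, mem_compl, coe_pair, mem_insert, mem_singleton, not_or]
    constructor
    · rintro ⟨hx, h⟩
      exact ⟨h, fun h => hx (h ▸ ha), fun h => hx (h ▸ hb)⟩
    · rintro ⟨h, hxa, hxb⟩
      exact ⟨fun hx => hs.notMem_line ha hb hx hab hxa hxb h, h⟩
  rw [this, card_sdiff_of_subset, hline, he]
  intro x hx
  simp only [mem_insert, mem_singleton] at hx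
  rcases hx with rfl | rfl
  · exact mem_image.2 ⟨0, by simp⟩
  · exact mem_image.2 ⟨1, by simp⟩

/-- Two distinct secants of an arc share at most one point outside the arc: if they shared two,
they would be the same line, containing three points of the arc. -/
lemma card_secant_inter {F : Type*} [Field F] [Fintype F] [DecidableEq (F × F)]
    {s e e' : Finset (F × F)}
    (hs : IsArc F (s : Set (F × F))) (hes : e ⊆ s) (he : e.card = 2) (hes' : e' ⊆ s)
    (he' : e'.card = 2) (hne : e ≠ e') : (secant s e ∩ secant s e').card ≤ 1 := by
  rw [card_le_one]
  intro x hx y hy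
  by_contra hxy
  obtain ⟨c, hce', hce⟩ : ∃ c ∈ e', c ∉ e := by
    by_contra! h
    exact hne (eq_of_subset_of_card_le h (by omega)).symm
  obtain ⟨a, b, hab, rfl⟩ := card_eq_two.1 he
  obtain ⟨a', b', hab', rfl⟩ := card_eq_two.1 he'
  simp only [mem_inter, secant, mem_filter, coe_pair] at hx hy
  have h1 : affineSpan F ({x, y} : Set (F × F)) = affineSpan F {a, b} :=
    affineSpan_pair_eq_of_mem_of_mem_of_ne hx.1.2 hy.1.2 hxy
  have h2 : affineSpan F ({x, y} : Set (F × F)) = affineSpan F {a', b'} :=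
    affineSpan_pair_eq_of_mem_of_mem_of_ne hx.2.2 hy.2.2 hxy
  have hc : c ∈ affineSpan F ({a, b} : Set (F × F)) := by
    rw [← h1, h2]
    exact subset_affineSpan F _ (by simpa using hce')
  simp only [mem_insert, mem_singleton, not_or] at hce
  exact hs.notMem_line (hes (by simp) : a ∈ s) (hes (by simp) : b ∈ s) (hes' hce') hab
    hce.1 hce.2 hc

/-- A family of `m` sets of size at least `N` with pairwise intersections of size at most one
has at least `m (N - (m - 1))` points, as each set has `N - (m - 1)` points in no other set. -/
lemma card_biUnion_ge {ι α : Type*} [DecidableEq ι] [DecidableEq α] (I : Finset ι)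
    (P : ι → Finset α) (N : ℕ) (hN : ∀ i ∈ I, N ≤ (P i).card)
    (hP : ∀ i ∈ I, ∀ j ∈ I, i ≠ j → (P i ∩ P j).card ≤ 1) :
    I.card * (N - (I.card - 1)) ≤ (I.biUnion P).card := by
  let Q : ι → Finset α := fun i => P i \ (I.erase i).biUnion fun j => P i ∩ P j
  have hQ : ∀ i ∈ I, N - (I.card - 1) ≤ (Q i).card := by
    intro i hi
    have h1 : ((I.erase i).biUnion fun j => P i ∩ P j).card ≤ (I.erase i).card * 1 :=
      card_biUnion_le_card_mul _ _ _ fun j hj =>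
        hP i hi j (mem_of_mem_erase hj) (ne_of_mem_erase hj).symm
    rw [card_erase_of_mem hi, mul_one] at h1
    have h2 := le_card_sdiff ((I.erase i).biUnion fun j => P i ∩ P j) (P i)
    have h3 := hN i hi
    change _ ≤ (P i \ _).card
    omega
  have hdisj : ∀ i ∈ I, ∀ j ∈ I, i ≠ j → Disjoint (Q i) (Q j) := by
    intro i hi j hj hij
    rw [disjoint_left]
    intro x hx hx'
    rw [mem_sdiff] at hx hx'
    exact hx.2 (mem_biUnion.2 ⟨j, mem_erase.2 ⟨hij.symm, hj⟩, mem_inter.2 ⟨hx.1, hx'.1⟩⟩)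
  calc I.card * (N - (I.card - 1)) ≤ ∑ i ∈ I, (Q i).card := card_nsmul_le_sum _ _ _ hQ
    _ = (I.biUnion Q).card := (card_biUnion hdisj).symm
    _ ≤ (I.biUnion P).card :=
      card_le_card (biUnion_mono fun i _ => sdiff_subset)

lemma bad_card_le {F : Type*} [Field F] [Fintype F] {s : Finset (F × F)}
    (hs : IsArc F (s : Set (F × F))) :
    (bad s).card ≤ s.card.choose 2 * (Fintype.card F - 2) := by
  classical
  rw [bad_eq hs, ← card_powersetCard]
  refine card_biUnion_le_card_mul _ _ _ fun e he => ?_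
  rw [mem_powersetCard] at he
  exact (card_secant hs he.1 he.2).le

lemma le_bad_card {F : Type*} [Field F] [Fintype F] {s : Finset (F × F)}
    (hs : IsArc F (s : Set (F × F))) :
    s.card.choose 2 * (Fintype.card F - 2 - (s.card.choose 2 - 1)) ≤ (bad s).card := by
  classical
  rw [bad_eq hs, ← card_powersetCard]
  refine card_biUnion_ge _ _ _ (fun e he => ?_) fun e he e' he' hne => ?_
  · rw [mem_powersetCard] at he
    exact (card_secant hs he.1 he.2).ge
  · rw [mem_powersetCard] at he he'
    exact card_secant_inter hs he.1 he.2 he'.1 he'.2 hne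

/-- The proportion of points extending an arc of size `k`, when `(k + 1) ^ 2 ≤ q`. -/
lemma good_bounds {F : Type*} [Field F] [Fintype F] {s : Finset (F × F)} {k : ℕ}
    (hs : IsArc F (s : Set (F × F))) (hk : s.card = k) (hkq : (k + 1) ^ 2 ≤ Fintype.card F) :
    ((Fintype.card F : ℝ) ^ 2 - k) * (1 - k.choose 2 / Fintype.card F) ≤ (good s).card ∧
    ((good s).card : ℝ) ≤
      ((Fintype.card F : ℝ) ^ 2 - k) * (1 - k.choose 2 / (2 * Fintype.card F)) := by
  have h0 := good_add_bad s
  have h1 := bad_card_le hs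
  have h2 := le_bad_card hs
  rw [hk] at h0 h1 h2
  have hq2 : 2 ≤ Fintype.card F := Fintype.one_lt_card
  set q := Fintype.card F with hq
  set m := k.choose 2 with hm
  have hm2 : 2 * m + k = k * k := by
    rw [hm, Nat.choose_two_right]
    rcases k with _ | n
    · rfl
    · have h := Nat.div_mul_cancel (even_iff_two_dvd.1 (Nat.even_mul_succ_self n))
      have e : (n + 1) * (n + 1 - 1) = n * (n + 1) := by simp [mul_comm]
      rw [e]; nlinarith
  have h0' : ((good s).card : ℝ) + (bad s).card + k = (q : ℝ) ^ 2 := by exact_mod_cast h0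
  have h1' : ((bad s).card : ℝ) ≤ m * ((q : ℝ) - 2) := by
    have : ((bad s).card : ℝ) ≤ ((m * (q - 2) : ℕ) : ℝ) := by exact_mod_cast h1
    rwa [Nat.cast_mul, Nat.cast_sub hq2] at this
  have hqpos : (0 : ℝ) < q := by exact_mod_cast (by omega : 0 < q)
  have hkq' : (k : ℝ) ≤ 2 * q := by exact_mod_cast (by nlinarith : k ≤ 2 * q)
  have hm0 : (0 : ℝ) ≤ m := Nat.cast_nonneg m
  constructor
  · have : ((q : ℝ) - 2) ≤ ((q : ℝ) ^ 2 - k) / q := by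
      rw [le_div_iff₀ hqpos]; nlinarith
    have h3 := mul_le_mul_of_nonneg_left this hm0
    have e : ((q : ℝ) ^ 2 - k) * (1 - m / q) = (q : ℝ) ^ 2 - k - m * (((q : ℝ) ^ 2 - k) / q) := by
      ring
    rw [e]; linarith
  · have h3 : (m : ℝ) * (q / 2) ≤ (bad s).card := by
      rcases Nat.eq_zero_or_pos m with h | h
      · rw [h]; simp
      · have h4 : q ≤ 2 * (q - 2 - (m - 1)) := by
          have : 2 * m + 2 ≤ q := by nlinarith
          omega
        have h4' : (q : ℝ) ≤ 2 * ((q - 2 - (m - 1) : ℕ) : ℝ) := by exact_mod_cast h4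
        have h2' : (m : ℝ) * ((q - 2 - (m - 1) : ℕ) : ℝ) ≤ (bad s).card := by exact_mod_cast h2
        nlinarith
    have h5 : ((q : ℝ) ^ 2 - k) * (m / (2 * q)) ≤ m * (q / 2) := by
      have e : (m : ℝ) * (q / 2) = (q : ℝ) ^ 2 * (m / (2 * q)) := by field_simp
      rw [e]
      exact mul_le_mul_of_nonneg_right (by simp) (by positivity)
    linarith

lemma exp_neg_two_mul_le {x : ℝ} (h0 : 0 ≤ x) (h1 : x ≤ 1 / 2) : Real.exp (-(2 * x)) ≤ 1 - x := by
  -- `exp (2 x) ≥ 1 + 2 x` and `(1 - x) (1 + 2 x) = 1 + x (1 - 2 x) ≥ 1`.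
  rw [Real.exp_neg, inv_le_iff_one_le_mul₀ (Real.exp_pos _)]
  have := Real.add_one_le_exp (2 * x)
  nlinarith

lemma arcs_bounds (F : Type*) [Field F] [Fintype F] (k : ℕ) (hk : k ^ 2 ≤ Fintype.card F) :
    ((Fintype.card F ^ 2).choose k : ℝ) * Real.exp (-(2 * (k.choose 3 / Fintype.card F))) ≤
      (arcs F k).card ∧
    ((arcs F k).card : ℝ) ≤
      ((Fintype.card F ^ 2).choose k : ℝ) * Real.exp (-(k.choose 3 / (2 * Fintype.card F))) := by
  induction k with
  | zero =>
    have : (arcs F 0).card = 1 := by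
      rw [card_eq_one]
      refine ⟨∅, ?_⟩
      ext s
      simp only [arcs, mem_filter, mem_univ, true_and, card_eq_zero, mem_singleton,
        and_iff_left_iff_imp]
      rintro rfl
      simp [IsArc]
    rw [this]; simp
  | succ k ih =>
    obtain ⟨ih1, ih2⟩ := ih ((Nat.pow_le_pow_left k.le_succ 2).trans hk)
    have hsum : ((k : ℝ) + 1) * (arcs F (k + 1)).card = ∑ s ∈ arcs F k, ((good s).card : ℝ) := by
      exact_mod_cast arcs_succ F k
    have hmem : ∀ s ∈ arcs F k, s.card = k ∧ IsArc F (s : Set (F × F)) := by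
      intro s hs
      simpa [arcs] using hs
    have hb := fun s hs => good_bounds (hmem s hs).2 (hmem s hs).1 hk
    have hlo := card_nsmul_le_sum _ _ _ fun s hs => (hb s hs).1
    have hhi := sum_le_card_nsmul _ _ _ fun s hs => (hb s hs).2
    rw [← hsum, nsmul_eq_mul] at hlo hhi
    have hq2 : 2 ≤ Fintype.card F := Fintype.one_lt_card
    set q := Fintype.card F with hq
    have hkq : k ≤ q ^ 2 := by nlinarith
    have hchoose : ((q ^ 2).choose (k + 1) : ℝ) * (k + 1) =
        (q ^ 2).choose k * ((q : ℝ) ^ 2 - k) := by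
      have := Nat.choose_succ_right_eq (q ^ 2) k
      have h : (((q ^ 2).choose (k + 1) * (k + 1) : ℕ) : ℝ) =
        (((q ^ 2).choose k * (q ^ 2 - k) : ℕ) : ℝ) := by exact_mod_cast this
      simpa [Nat.cast_sub hkq] using h
    have hqpos : (0 : ℝ) < q := by exact_mod_cast (by omega : 0 < q)
    have hk3 : ((k + 1).choose 3 : ℝ) = k.choose 2 + k.choose 3 := by
      exact_mod_cast Nat.choose_succ_succ k 2
    have hD : (0 : ℝ) ≤ (q : ℝ) ^ 2 - k := by
      have : (k : ℝ) ≤ (q : ℝ) ^ 2 := by exact_mod_cast hkq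
      linarith
    have hm : (k.choose 2 : ℝ) / q ≤ 1 / 2 := by
      rw [div_le_iff₀ hqpos]
      have h1 : (k.choose 2 : ℝ) = k * (k - 1) / 2 := Nat.cast_choose_two ℝ k
      have h2 : ((k : ℝ) + 1) ^ 2 ≤ q := by exact_mod_cast hk
      rw [h1]; nlinarith [Nat.cast_nonneg (α := ℝ) k]
    have hkpos : (0 : ℝ) < (k : ℝ) + 1 := by positivity
    constructor
    · have hx := exp_neg_two_mul_le (x := (k.choose 2 : ℝ) / q) (by positivity) hm
      have he : Real.exp (-(2 * (((k + 1).choose 3 : ℕ) / q : ℝ))) =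
          Real.exp (-(2 * (k.choose 3 / q))) * Real.exp (-(2 * (k.choose 2 / q))) := by
        rw [← Real.exp_add, hk3]; congr 1; ring
      rw [he]
      refine le_of_mul_le_mul_left ?_ hkpos
      refine le_trans ?_ hlo
      calc _ = (((q ^ 2).choose (k + 1) : ℝ) * (k + 1)) *
            (Real.exp (-(2 * (k.choose 3 / q))) * Real.exp (-(2 * (k.choose 2 / q)))) := by ring
        _ = ((q ^ 2).choose k * Real.exp (-(2 * (k.choose 3 / q)))) *
            (((q : ℝ) ^ 2 - k) * Real.exp (-(2 * (k.choose 2 / q)))) := by rw [hchoose]; ring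
        _ ≤ _ := by gcongr
    · have hx : 1 - (k.choose 2 : ℝ) / (2 * q) ≤ Real.exp (-(k.choose 2 / (2 * q))) := by
        have := Real.add_one_le_exp (-((k.choose 2 : ℝ) / (2 * q)))
        linarith
      have he : Real.exp (-(((k + 1).choose 3 : ℕ) / (2 * q) : ℝ)) =
          Real.exp (-(k.choose 3 / (2 * q))) * Real.exp (-(k.choose 2 / (2 * q))) := by
        rw [← Real.exp_add, hk3]; congr 1; ring
      have hnn : (0 : ℝ) ≤ 1 - k.choose 2 / (2 * q) := by
        have : (k.choose 2 : ℝ) / (2 * q) = k.choose 2 / q / 2 := by field_simp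
        rw [this]; linarith
      have hnn' := mul_nonneg hD hnn
      rw [he]
      refine le_of_mul_le_mul_left ?_ hkpos
      refine le_trans hhi ?_
      calc _ ≤ ((q ^ 2).choose k * Real.exp (-(k.choose 3 / (2 * q)))) *
            (((q : ℝ) ^ 2 - k) * Real.exp (-(k.choose 2 / (2 * q)))) := by gcongr
        _ = (((q ^ 2).choose (k + 1) : ℝ) * (k + 1)) *
            (Real.exp (-(k.choose 3 / (2 * q))) * Real.exp (-(k.choose 2 / (2 * q)))) := by
          rw [hchoose]; ring
        _ = _ := by ring

lemma six_mul_choose_three (k : ℕ) :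
    6 * (k.choose 3 : ℝ) = k * (k - 1) * (k - 2) := by
  induction k with
  | zero => simp
  | succ k ih =>
    have : ((k + 1).choose 3 : ℝ) = k.choose 2 + k.choose 3 := by
      exact_mod_cast Nat.choose_succ_succ k 2
    rw [this, Nat.cast_choose_two, mul_add, ih]; push_cast; ring

theorem arc_count_small_k :
    ∃ c : ℝ, 0 < c ∧ ∀ δ : ℝ, 0 < δ → ∃ C : ℝ, 0 < C ∧
      ∀ (F : Type) [Field F] [Fintype F], ∀ k : ℕ,
        3 ≤ k → (k : ℝ) ≤ Real.sqrt (Fintype.card F) / (1 + δ) →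
        ((Fintype.card F ^ 2).choose k : ℝ) *
            Real.exp (-C * (k : ℝ) ^ 3 / (Fintype.card F : ℝ)) ≤ (numArcs F k : ℝ) ∧
        (numArcs F k : ℝ) ≤ ((Fintype.card F ^ 2).choose k : ℝ) *
            Real.exp (-c * (k : ℝ) ^ 3 / (Fintype.card F : ℝ)) := by
  refine ⟨1 / 54, by norm_num, fun δ hδ => ⟨1, one_pos, ?_⟩⟩
  intro F _ _ k hk3 hk
  have hqpos : (0 : ℝ) < Fintype.card F := by exact_mod_cast Fintype.card_pos
  have hkq : k ^ 2 ≤ Fintype.card F := by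
    have h1 : (k : ℝ) ≤ Real.sqrt (Fintype.card F) :=
      hk.trans (div_le_self (Real.sqrt_nonneg _) (by linarith))
    have h2 := (Real.le_sqrt (Nat.cast_nonneg k) hqpos.le).1 h1
    exact_mod_cast h2
  obtain ⟨hlo, hhi⟩ := arcs_bounds F k hkq
  have h6 := six_mul_choose_three k
  have hk3' : (3 : ℝ) ≤ k := by exact_mod_cast hk3
  rw [numArcs_eq]
  constructor
  · refine le_trans ?_ hlo
    gcongr
    rw [neg_mul, neg_div, neg_le_neg_iff, ← mul_div_assoc]
    refine div_le_div_of_nonneg_right ?_ hqpos.le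
    nlinarith
  · refine hhi.trans ?_
    gcongr
    have : (k : ℝ) ^ 3 / 27 ≤ k.choose 3 := by
      -- `27 k (k - 1) (k - 2) - 6 k³ = 3 k (k - 3) (7 k - 6)`
      nlinarith [mul_nonneg (mul_nonneg (by linarith : (0 : ℝ) ≤ k) (sub_nonneg.2 hk3'))
        (by linarith : (0 : ℝ) ≤ 7 * k - 6)]
    calc _ = -((k.choose 3 : ℝ) / 2 / Fintype.card F) := by rw [div_div]
      _ ≤ -((k : ℝ) ^ 3 / 27 / 2 / Fintype.card F) := by gcongr
      _ = _ := by ring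
end

section
/- For every δ > 0 there exists q₀ such that for every prime power q ≥ q₀ and every integer k with q^{1/2+δ} ≤ k ≤ q, one has A(q,k) ≤ binom(⌈2 q^{2+3δ/2}/k⌉, k). (Equivalently, writing k = q^t with t ≥ 1/2 + δ, A(q,k) ≤ binom(⌈2 q^{2−t+3δ/2}⌉, k).) -/
/-!
The bound follows from a container argument of Kleitman–Winston type. Write `q = |F|`.

Fix an `r`-arc `T` with `r ≈ √q`, and join two distinct points outside `T` when their line meets
`T`. Every arc containing `T` is independent in this graph (`not_secantAdj_of_isArc`). The graph is
dense on every set `X` of more than `4 (q + 1)` points: each `t ∈ T` sees `X` along `q + 1` lines, so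
by Cauchy–Schwarz about `|X|² / q` pairs of `X` are collinear with `t`, and since `T` is an arc, a
line contains at most two points of `T`, so each pair is counted at most twice. Hence some vertex of
`X` has at least `(r / (8 (q + 1))) |X|` neighbours in `X` (`exists_large_secantAdj_degree`).

Repeatedly branching on such a vertex (`card_independent_le`), the vertex set falls below
`4 (q + 1)` after `s = O((q / r) log q)` selected vertices, so the number of `k`-arcs is at most
`(q²)^r (q² + 1)^s * binom(4 (q + 1), k)` (`numArcs_le`). As `r + s = O(√q log q)`, the first two
factors are at most `2 ^ k` once `k ≥ q^(1/2 + δ)` and `q` is large. Finally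
`2 ^ k * binom(R, k) ≤ binom(2 R, k)`, and `8 (q + 1) ≤ 2 q^(2 + 3δ/2) / k` because `k ≤ q`.
-/

open Finset MeasureTheory
open scoped NNReal ENNReal

/-! ### Kleitman–Winston counting for graphs -/

/-- The number of independent `k`-subsets of `X`, when every vertex set with more than `R` elements
has a vertex adjacent to a proportion at least `β` of it. The parameter `s` bounds how often passing
to the non-neighbours of such a vertex can happen before at most `R` vertices are left. -/
lemma card_independent_le {V : Type*} [DecidableEq V] (adj : V → V → Prop) [DecidableRel adj]
    (β : ℝ) (R : ℕ) (hβ : β ≤ 1)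
    (h : ∀ X : Finset V, R < #X → ∃ v ∈ X, β * #X ≤ #(X.filter (adj v))) :
    ∀ (X : Finset V) (s k : ℕ), (1 - β) ^ s * #X ≤ R → k ≤ R / 2 →
      #((powersetCard k X).filter (fun A => ∀ x ∈ A, ∀ y ∈ A, ¬ adj x y))
        ≤ (#X + 1) ^ s * R.choose k := by
  intro X
  induction X using Finset.strongInduction with
  | H X ih =>
  intro s k hs hk
  have hsmall : #X ≤ R → #((powersetCard k X).filter (fun A => ∀ x ∈ A, ∀ y ∈ A, ¬ adj x y))
        ≤ (#X + 1) ^ s * R.choose k := by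
    intro hR
    calc _ ≤ #(powersetCard k X) := card_filter_le _ _
      _ = (#X).choose k := card_powersetCard _ _
      _ ≤ R.choose k := Nat.choose_le_choose _ hR
      _ ≤ _ := Nat.le_mul_of_pos_left _ (by positivity)
  rcases le_or_gt (#X) R with hR | hR
  · exact hsmall hR
  rcases s with _ | s
  · exact hsmall (by simpa using hs)
  rcases k with _ | k
  · calc _ ≤ #(powersetCard 0 X) := card_filter_le _ _
      _ = 1 := by simp
      _ ≤ _ := by rw [Nat.choose_zero_right]; exact Nat.mul_pos (by positivity) one_pos
  obtain ⟨v, hv, hdeg⟩ := h X hR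
  set Y := (X.erase v).filter (fun y => ¬ adj v y) with hY
  have h1 : (1 - β) ^ (s + 1) * #(X.erase v) ≤ R := by
    refine le_trans ?_ hs
    have : (0:ℝ) ≤ (1 - β) ^ (s + 1) := pow_nonneg (by linarith) _
    gcongr
    exact erase_subset _ _
  have hYsub : Y ⊆ X.erase v := filter_subset _ _
  have hYcard : (#Y : ℝ) ≤ (1 - β) * #X := by
    have h2 : #Y ≤ #(X.filter (fun y => ¬ adj v y)) :=
      card_le_card (filter_subset_filter _ (erase_subset _ _))
    have h3 := card_filter_add_card_filter_not (s := X) (adj v)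
    have h3' : (#(X.filter (adj v)) : ℝ) + #(X.filter (fun y => ¬ adj v y)) = #X := by
      exact_mod_cast h3
    have h2' : (#Y : ℝ) ≤ #(X.filter (fun y => ¬ adj v y)) := by exact_mod_cast h2
    linarith
  have h2 : (1 - β) ^ s * #Y ≤ R := by
    refine le_trans ?_ hs
    rw [pow_succ, mul_assoc]
    have : (0:ℝ) ≤ (1 - β) ^ s := pow_nonneg (by linarith) _
    gcongr
  have i1 := ih (X.erase v) (erase_ssubset hv) (s + 1) (k + 1) h1 hk
  have i2 := ih Y (lt_of_le_of_lt hYsub (erase_ssubset hv)) s k h2 (by omega)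
  have hn : #(X.erase v) + 1 = #X := card_erase_add_one hv
  have hYn : #Y + 1 ≤ #X := by have := card_le_card hYsub; omega
  have hB : R.choose k ≤ R.choose (k + 1) := Nat.choose_le_succ_of_lt_half_left (by omega)
  rw [hn] at i1
  -- Independent sets either avoid `v`, or consist of `v` and an independent set in `Y`.
  have hcover : (powersetCard (k + 1) X).filter (fun A => ∀ x ∈ A, ∀ y ∈ A, ¬ adj x y) ⊆
      (powersetCard (k + 1) (X.erase v)).filter (fun A => ∀ x ∈ A, ∀ y ∈ A, ¬ adj x y) ∪
      ((powersetCard k Y).filter (fun A => ∀ x ∈ A, ∀ y ∈ A, ¬ adj x y)).image (insert v) := by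
    intro A hA
    simp only [mem_filter, mem_powersetCard] at hA
    obtain ⟨⟨hAX, hAk⟩, hind⟩ := hA
    rw [mem_union]
    by_cases hvA : v ∈ A
    · right
      refine mem_image.2 ⟨A.erase v, ?_, insert_erase hvA⟩
      simp only [mem_filter, mem_powersetCard]
      refine ⟨⟨?_, ?_⟩, ?_⟩
      · intro x hx
        rw [hY, mem_filter]
        exact ⟨erase_subset_erase _ hAX hx, hind v hvA x (mem_of_mem_erase hx)⟩
      · rw [card_erase_of_mem hvA, hAk]; rfl
      · exact fun x hx y hy => hind x (mem_of_mem_erase hx) y (mem_of_mem_erase hy)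
    · left
      simp only [mem_filter, mem_powersetCard]
      exact ⟨⟨subset_erase.2 ⟨hAX, hvA⟩, hAk⟩, hind⟩
  calc _ ≤ (#X) ^ (s + 1) * R.choose (k + 1) + (#Y + 1) ^ s * R.choose k :=
        (card_le_card hcover).trans <| (card_union_le _ _).trans <|
          add_le_add i1 (card_image_le.trans i2)
    _ ≤ (#X) ^ (s + 1) * R.choose (k + 1) + (#X) ^ s * R.choose (k + 1) := by gcongr
    _ = (#X) ^ s * (#X + 1) * R.choose (k + 1) := by ring
    _ ≤ (#X + 1) ^ s * (#X + 1) * R.choose (k + 1) := by gcongr; omega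
    _ = _ := by ring

/-- Cauchy–Schwarz: a map to a type with few elements has many pairs with equal images. -/
lemma sq_card_le_collisions {α γ : Type*} [DecidableEq γ] [Fintype γ] (X : Finset α) (f : α → γ) :
    #X ^ 2 ≤ Fintype.card γ * ∑ x ∈ X, #(X.filter (fun y => f y = f x)) := by
  have h1 : #X = ∑ d : γ, #(X.filter (fun y => f y = d)) :=
    card_eq_sum_card_fiberwise (fun _ _ => mem_coe.2 (mem_univ _))
  have h2 : ∑ x ∈ X, #(X.filter (fun y => f y = f x))
      = ∑ d : γ, #(X.filter (fun y => f y = d)) ^ 2 := by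
    rw [← sum_fiberwise X f]
    refine sum_congr rfl fun d _ => ?_
    rw [sum_congr rfl (g := fun _ => #(X.filter (fun y => f y = d)))]
    · simp [sq]
    · intro x hx
      rw [(mem_filter.1 hx).2]
  rw [h2]
  nth_rewrite 1 [h1]
  simpa using sq_sum_le_card_mul_sum_sq (s := (univ : Finset γ))
    (f := fun d => #(X.filter (fun y => f y = d)))

/-! ### Collinearity in the plane -/

section Plane

variable {F : Type} [Field F]

/-- The determinant of `x - t` and `y - t`; it vanishes exactly when `t, x, y` are collinear. -/
def triDet (t x y : F × F) : F :=
  (x.1 - t.1) * (y.2 - t.2) - (x.2 - t.2) * (y.1 - t.1)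

lemma collinear_of_triDet (a b c : F × F) (hab : a ≠ b) (h : triDet a b c = 0) :
    Collinear F ({a, b, c} : Set (F × F)) := by
  rw [collinear_iff_of_mem (p₀ := a) (by simp)]
  refine ⟨b - a, ?_⟩
  have key : ∃ r : F, c = r • (b - a) +ᵥ a := by
    unfold triDet at h
    by_cases h1 : b.1 - a.1 = 0
    · have h2 : b.2 - a.2 ≠ 0 := by
        intro h2
        exact hab (Prod.ext (sub_eq_zero.1 h1).symm (sub_eq_zero.1 h2).symm)
      have h3 : c.1 - a.1 = 0 := by
        rw [h1] at h
        simpa [h2] using h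
      refine ⟨(c.2 - a.2) / (b.2 - a.2), Prod.ext ?_ ?_⟩
      · simp [h1, sub_eq_zero.1 h3]
      · simp [h2]
    · refine ⟨(c.1 - a.1) / (b.1 - a.1), Prod.ext ?_ ?_⟩
      · simp [h1]
      · simp only [vadd_eq_add, Prod.snd_add, Prod.smul_snd, Prod.snd_sub, smul_eq_mul]
        field_simp
        linear_combination h
  intro p hp
  simp only [Set.mem_insert_iff, Set.mem_singleton_iff] at hp
  rcases hp with rfl | rfl | rfl
  · exact ⟨0, by simp⟩
  · exact ⟨1, by simp⟩
  · exact key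

lemma triDet_three (x y a b c : F × F) (hxy : x ≠ y) (ha : triDet a x y = 0)
    (hb : triDet b x y = 0) (hc : triDet c x y = 0) : triDet a b c = 0 := by
  unfold triDet at *
  by_cases h1 : y.1 - x.1 = 0
  · have h2 : y.2 - x.2 ≠ 0 := fun h2 =>
      hxy (Prod.ext (sub_eq_zero.1 h1).symm (sub_eq_zero.1 h2).symm)
    refine mul_left_cancel₀ h2 ?_
    grind
  · refine mul_left_cancel₀ h1 ?_
    grind

/-- The direction of a vector, as a point of the projective line `F ∪ {∞}`. -/
def dir [DecidableEq F] (u : F × F) : Option F :=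
  if u.1 = 0 then none else some (u.2 / u.1)

lemma triDet_of_dir [DecidableEq F] (t x y : F × F) (h : dir (y - t) = dir (x - t)) :
    triDet t x y = 0 := by
  unfold dir at h
  simp only [Prod.fst_sub, Prod.snd_sub] at h
  unfold triDet
  by_cases h1 : y.1 - t.1 = 0 <;> by_cases h2 : x.1 - t.1 = 0
  · simp [h1, h2]
  · simp [h1, h2] at h
  · simp [h1, h2] at h
  · simp only [h1, h2, if_false, Option.some.injEq] at h
    field_simp at h
    linear_combination h

/-- The graph of pairs of distinct points, outside `T`, whose line meets `T`. Points of `T` are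
isolated vertices, so every arc containing `T` is an independent set. -/
def secantAdj (T : Finset (F × F)) (x y : F × F) : Prop :=
  x ≠ y ∧ x ∉ T ∧ y ∉ T ∧ ∃ t ∈ T, triDet t x y = 0

lemma card_on_line_le_two [DecidableEq F] (T : Finset (F × F)) (hT : IsArc F (T : Set (F × F)))
    (x y : F × F) (hxy : x ≠ y) : #(T.filter (fun t => triDet t x y = 0)) ≤ 2 := by
  by_contra hcon
  obtain ⟨a, b, c, ha, hb, hc, hab, hac, hbc⟩ := two_lt_card_iff.1 (not_le.1 hcon)
  rw [mem_filter] at ha hb hc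
  exact hT a ha.1 b hb.1 c hc.1 hab hac hbc
    (collinear_of_triDet a b c hab (triDet_three x y a b c hxy ha.2 hb.2 hc.2))

lemma not_secantAdj_of_isArc (T A : Finset (F × F)) (hTA : T ⊆ A)
    (hA : IsArc F (A : Set (F × F))) : ∀ x ∈ A, ∀ y ∈ A, ¬ secantAdj T x y := by
  rintro x hx y hy ⟨hxy, hxT, hyT, t, ht, hd⟩
  have htx : t ≠ x := fun h => hxT (h ▸ ht)
  have hty : t ≠ y := fun h => hyT (h ▸ ht)
  exact hA t (hTA ht) x hx y hy htx hty hxy (collinear_of_triDet t x y htx hd)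

open Classical in
/-- Every `t ∈ T` sees `X` along `q + 1` lines, so Cauchy–Schwarz yields many pairs collinear with
`t`; as `T` is an arc, no pair is counted more than twice. -/
lemma exists_large_secantAdj_degree [Fintype F] (T X : Finset (F × F))
    (hT : IsArc F (T : Set (F × F))) (hTq : #T ≤ Fintype.card F)
    (hX : 4 * (Fintype.card F + 1) < #X) :
    ∃ v ∈ X, (#T / (8 * (Fintype.card F + 1)) : ℝ) * #X ≤ #(X.filter (secantAdj T v)) := by
  by_contra! hcon
  set q := Fintype.card F with hq
  set X' := X \ T with hX'
  have hX'X : X' ⊆ X := sdiff_subset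
  have hXcard : #X ≤ #X' + #T := by
    have := card_le_card_sdiff_add_card (s := X) (t := T)
    omega
  have hper : ∀ t ∈ T, #X' ^ 2 ≤ (q + 1) *
      ∑ x ∈ X', (#((X.filter (secantAdj T x)).filter (fun y => triDet t x y = 0)) + 1) := by
    intro t ht
    have h1 := sq_card_le_collisions X' (fun x => dir (x - t))
    rw [Fintype.card_option] at h1
    refine h1.trans (Nat.mul_le_mul_left _ (sum_le_sum fun x hx => ?_))
    have hxT : x ∉ T := (mem_sdiff.1 hx).2
    refine le_trans (card_le_card ?_) (card_insert_le x _)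
    intro y hy
    obtain ⟨hy, hd⟩ := mem_filter.1 hy
    have hyT : y ∉ T := (mem_sdiff.1 hy).2
    have hD := triDet_of_dir t x y hd
    rw [mem_insert, or_iff_not_imp_left]
    intro hyx
    simp only [mem_filter]
    exact ⟨⟨hX'X hy, Ne.symm hyx, hxT, hyT, t, ht, hD⟩, hD⟩
  have hswap : ∀ x ∈ X', ∑ t ∈ T, #((X.filter (secantAdj T x)).filter (fun y => triDet t x y = 0))
      ≤ 2 * #(X.filter (secantAdj T x)) := by
    intro x _
    have := sum_card_bipartiteAbove_eq_sum_card_bipartiteBelow (s := T)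
      (t := X.filter (secantAdj T x)) (fun t y => triDet t x y = 0)
    unfold bipartiteAbove bipartiteBelow at this
    rw [this, mul_comm, ← smul_eq_mul]
    refine sum_le_card_nsmul _ _ _ fun y hy => ?_
    exact card_on_line_le_two T hT x y (mem_filter.1 hy).2.1
  have htotal : #T * #X' ^ 2 ≤ (q + 1) * (#X' * #T + ∑ x ∈ X', 2 * #(X.filter (secantAdj T x))) := by
    calc #T * #X' ^ 2 = ∑ t ∈ T, #X' ^ 2 := by simp
      _ ≤ _ := sum_le_sum hper
      _ = (q + 1) * (#X' * #T + ∑ x ∈ X', ∑ t ∈ T,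
            #((X.filter (secantAdj T x)).filter (fun y => triDet t x y = 0))) := by
          rw [← mul_sum, sum_comm]
          simp [sum_add_distrib, add_comm]
      _ ≤ _ := by gcongr with x hx; exact hswap x hx
  have hreal : (#T : ℝ) * (#X' : ℝ) ^ 2 ≤
      (q + 1) * (#X' * #T + ∑ x ∈ X', 2 * (#(X.filter (secantAdj T x)) : ℝ)) := by
    exact_mod_cast htotal
  have hsum : ∑ x ∈ X', 2 * (#(X.filter (secantAdj T x)) : ℝ) ≤
      #X' * (2 * ((#T / (8 * (q + 1)) : ℝ) * #X)) := by
    rw [← nsmul_eq_mul]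
    refine sum_le_card_nsmul _ _ _ fun x hx => ?_
    have := hcon x (hX'X hx)
    linarith
  have hXr : (#X : ℝ) ≤ #X' + #T := by exact_mod_cast hXcard
  have hTr : (#T : ℝ) ≤ q := by exact_mod_cast hTq
  have hXq : 4 * ((q : ℝ) + 1) < #X := by exact_mod_cast hX
  have hX'pos : (0 : ℝ) < #X' := by linarith [Nat.cast_nonneg (α := ℝ) q]
  have hTpos : (0 : ℝ) < #T := by
    obtain ⟨v, hv⟩ : X.Nonempty := card_pos.1 (by omega)
    have h0 := hcon v hv
    rcases Nat.eq_zero_or_pos (#T) with h | h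
    · rw [h] at h0
      simp at h0
      exact absurd h0 (not_lt.2 (Nat.cast_nonneg _))
    · exact_mod_cast h
  have hq0 : (0 : ℝ) < (q : ℝ) + 1 := by positivity
  have hfin : (#T : ℝ) * (#X' : ℝ) ^ 2 ≤ #X' * #T * ((q + 1) + #X / 4) := by
    calc _ ≤ ((q : ℝ) + 1) * (#X' * #T + #X' * (2 * ((#T / (8 * (q + 1)) : ℝ) * #X))) :=
          hreal.trans (by gcongr)
      _ = _ := by field_simp; ring
  have hfin2 : (#X' : ℝ) ≤ (q + 1) + #X / 4 := by
    have hp : (0 : ℝ) < #X' * #T := by positivity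
    refine le_of_mul_le_mul_left ?_ hp
    calc _ = (#T : ℝ) * (#X' : ℝ) ^ 2 := by ring
      _ ≤ _ := hfin
  linarith

/-! ### Counting arcs -/

open Classical in
/-- Every `k`-arc contains an `r`-arc `T`, and is then an independent set for `secantAdj T`. -/
lemma numArcs_le [Fintype F] (k r s : ℕ) (hrk : r ≤ k) (hk : k ≤ Fintype.card F)
    (hs : (1 - (r / (8 * (Fintype.card F + 1)) : ℝ)) ^ s * (Fintype.card F : ℝ) ^ 2 ≤ 1) :
    numArcs F k ≤ ((Fintype.card F) ^ 2) ^ r *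
      (((Fintype.card F) ^ 2 + 1) ^ s * (4 * (Fintype.card F + 1)).choose k) := by
  set q := Fintype.card F with hq
  have hV : #(univ : Finset (F × F)) = q ^ 2 := by
    rw [card_univ, Fintype.card_prod, sq]
  have hnum : numArcs F k = #((powersetCard k (univ : Finset (F × F))).filter
      (fun A : Finset (F × F) => IsArc F (A : Set (F × F)))) := by
    unfold numArcs
    rw [Nat.card_eq_fintype_card, Fintype.card_subtype]
    congr 1
    ext A
    simp [mem_powersetCard]
  rw [hnum]
  set 𝒯 := (powersetCard r (univ : Finset (F × F))).filter
    (fun A : Finset (F × F) => IsArc F (A : Set (F × F))) with h𝒯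
  have hcover : (powersetCard k (univ : Finset (F × F))).filter
      (fun A : Finset (F × F) => IsArc F (A : Set (F × F))) ⊆ 𝒯.biUnion (fun T =>
        (powersetCard k (univ : Finset (F × F))).filter
          (fun A : Finset (F × F) => ∀ x ∈ A, ∀ y ∈ A, ¬ secantAdj T x y)) := by
    intro A hA
    obtain ⟨hAk, hA⟩ := mem_filter.1 hA
    obtain ⟨T, hTA, hTr⟩ := exists_subset_card_eq (s := A) (n := r)
      (by rw [(mem_powersetCard.1 hAk).2]; exact hrk)
    rw [mem_biUnion]
    refine ⟨T, ?_, mem_filter.2 ⟨hAk, not_secantAdj_of_isArc T A hTA hA⟩⟩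
    rw [h𝒯, mem_filter, mem_powersetCard]
    exact ⟨⟨subset_univ _, hTr⟩,
      fun a ha b hb c hc => hA a (hTA ha) b (hTA hb) c (hTA hc)⟩
  have h𝒯card : #𝒯 ≤ (q ^ 2) ^ r := by
    calc #𝒯 ≤ #(powersetCard r (univ : Finset (F × F))) := card_filter_le _ _
      _ = (q ^ 2).choose r := by rw [card_powersetCard, hV]
      _ ≤ _ := Nat.choose_le_pow _ _
  refine (card_le_card hcover).trans ?_
  refine (card_biUnion_le_card_mul _ _ ((q ^ 2 + 1) ^ s * (4 * (q + 1)).choose k) ?_).trans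
    (Nat.mul_le_mul_right _ h𝒯card)
  intro T hT
  obtain ⟨hTr, hTarc⟩ := mem_filter.1 hT
  have hTr := (mem_powersetCard.1 hTr).2
  have hrq : (r : ℝ) ≤ q := by exact_mod_cast hrk.trans hk
  have := card_independent_le (secantAdj T) (r / (8 * (q + 1)) : ℝ) (4 * (q + 1))
    (by rw [div_le_one (by positivity)]; linarith [Nat.cast_nonneg (α := ℝ) q])
    (fun X hX => by
      have := exists_large_secantAdj_degree T X hTarc (by omega) hX
      rwa [hTr] at this)
    univ s k
    (by
      rw [hV]; push_cast
      exact hs.trans (by linarith [Nat.cast_nonneg (α := ℝ) q]))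
    (by omega)
  rw [hV] at this
  convert this

end Plane

/-! ### Numerical estimates -/

lemma two_pow_mul_choose_le (R k : ℕ) : 2 ^ k * R.choose k ≤ (2 * R).choose k := by
  have h : 2 ^ k * R.descFactorial k ≤ (2 * R).descFactorial k := by
    induction k with
    | zero => simp
    | succ k ih =>
      rw [Nat.descFactorial_succ, Nat.descFactorial_succ]
      calc 2 ^ (k + 1) * ((R - k) * R.descFactorial k)
          = (2 * (R - k)) * (2 ^ k * R.descFactorial k) := by ring
        _ ≤ _ := Nat.mul_le_mul (by omega) ih
  rw [Nat.descFactorial_eq_factorial_mul_choose, Nat.descFactorial_eq_factorial_mul_choose] at h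
  refine Nat.le_of_mul_le_mul_left ?_ (Nat.factorial_pos k)
  calc _ = 2 ^ k * (k.factorial * R.choose k) := by ring
    _ ≤ _ := h

lemma exists_threshold (δ : ℝ) (hδ : 0 < δ) : ∃ q₀ : ℕ, ∀ q : ℕ, q₀ ≤ q → 3 ≤ q ∧
    8 ≤ (q : ℝ) ^ (3 * δ / 2) ∧ 300 * Real.log q ^ 2 ≤ (q : ℝ) ^ δ := by
  have h1 : ∀ᶠ x : ℝ in Filter.atTop, 8 ≤ x ^ (3 * δ / 2) :=
    (tendsto_rpow_atTop (by positivity)).eventually_ge_atTop 8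
  have h2 := (isLittleO_log_rpow_atTop (r := δ / 2) (by positivity)).bound
    (c := 1 / 20) (by norm_num)
  have h3 := (h1.and (h2.and (Filter.eventually_ge_atTop 3)))
  obtain ⟨q₀, hq₀⟩ := Filter.eventually_atTop.1 (tendsto_natCast_atTop_atTop.eventually h3)
  refine ⟨q₀, fun q hq => ?_⟩
  obtain ⟨a, b, c⟩ := hq₀ q hq
  refine ⟨by exact_mod_cast c, a, ?_⟩
  have hlog : 0 ≤ Real.log q := Real.log_nonneg (by linarith)
  rw [Real.norm_of_nonneg hlog, Real.norm_of_nonneg (by positivity)] at b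
  have hsq : (q : ℝ) ^ δ = ((q : ℝ) ^ (δ / 2)) ^ 2 := by
    rw [← Real.rpow_natCast, ← Real.rpow_mul (by positivity)]
    congr 1
    push_cast
    ring
  rw [hsq]
  nlinarith [sq_nonneg (Real.log q)]

theorem arc_count_large_k :
    ∀ δ : ℝ, 0 < δ → ∃ q₀ : ℕ, ∀ (F : Type) [Field F] [Fintype F],
      q₀ ≤ Fintype.card F → ∀ k : ℕ,
      (Fintype.card F : ℝ) ^ ((1 : ℝ) / 2 + δ) ≤ (k : ℝ) → k ≤ Fintype.card F →
      numArcs F k ≤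
        Nat.choose ⌈2 * (Fintype.card F : ℝ) ^ ((2 : ℝ) + 3 * δ / 2) / (k : ℝ)⌉₊ k := by
  intro δ hδ
  obtain ⟨q₀, hq₀⟩ := exists_threshold δ hδ
  refine ⟨q₀, fun F _ _ hq k hk hkq => ?_⟩
  obtain ⟨hq3, h8, hlog⟩ := hq₀ _ hq
  set q := Fintype.card F with hqdef
  have hq3' : (3 : ℝ) ≤ q := by exact_mod_cast hq3
  have hqpos : (0 : ℝ) < q := by linarith
  set L := Real.log q with hL
  set Q := √(q : ℝ) with hQ
  have hQQ : Q * Q = q := Real.mul_self_sqrt hqpos.le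
  have hQ0 : 0 ≤ Q := Real.sqrt_nonneg _
  have hQ1 : 1 ≤ Q := by nlinarith
  have hL1 : 1 ≤ L := by
    rw [hL, Real.le_log_iff_exp_le hqpos]
    linarith [Real.exp_one_lt_d9]
  have hkQ : Q * (q : ℝ) ^ δ ≤ k := by
    rw [Real.rpow_add hqpos, ← Real.sqrt_eq_rpow] at hk
    exact hk
  have hk300 : 300 * (Q * L ^ 2) ≤ k := by
    refine le_trans ?_ hkQ
    nlinarith
  have hkpos : (0 : ℝ) < k := by
    have : 0 < Q * L ^ 2 := by positivity
    linarith
  -- `r` balances the two parts `r` and `(q / r) log q` of the fingerprint.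
  set r := ⌈Q⌉₊ with hr
  have hrQ : Q ≤ r := Nat.le_ceil _
  have hrQ2 : (r : ℝ) ≤ 2 * Q := by
    have := (Nat.ceil_lt_add_one hQ0).le
    linarith
  have hr0 : (0 : ℝ) < r := by linarith
  have hrk : r ≤ k := by
    refine Nat.ceil_le.2 (le_trans ?_ hk300)
    have : Q * 1 ≤ Q * L ^ 2 := mul_le_mul_of_nonneg_left (one_le_pow₀ hL1) hQ0
    linarith
  set s := ⌈16 * ((q : ℝ) + 1) * L / r⌉₊ with hs
  have hs1 : 16 * ((q : ℝ) + 1) * L / r ≤ s := Nat.le_ceil _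
  have hs2 : (s : ℝ) ≤ 33 * (Q * L) := by
    have h1 : (s : ℝ) ≤ 16 * ((q : ℝ) + 1) * L / r + 1 :=
      (Nat.ceil_lt_add_one (by positivity)).le
    have h2 : 16 * ((q : ℝ) + 1) * L / r ≤ 32 * (Q * L) := by
      rw [div_le_iff₀ hr0]
      calc 16 * ((q : ℝ) + 1) * L ≤ 16 * (2 * (Q * Q)) * L := by
            gcongr
            linarith
        _ = 32 * (Q * L) * Q := by ring
        _ ≤ _ := by gcongr
    nlinarith
  have hrq : (r : ℝ) ≤ q := by exact_mod_cast hrk.trans hkq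
  have hshrink : (1 - (r / (8 * (q + 1)) : ℝ)) ^ s * (q : ℝ) ^ 2 ≤ 1 := by
    have h0 : (0 : ℝ) ≤ 1 - (r / (8 * (q + 1)) : ℝ) := by
      rw [sub_nonneg, div_le_one (by positivity)]
      linarith
    have h1 : (1 - (r / (8 * (q + 1)) : ℝ)) ^ s ≤ Real.exp (-(2 * L)) := by
      calc _ ≤ Real.exp (-(r / (8 * (q + 1)) : ℝ)) ^ s :=
            pow_le_pow_left₀ h0 (Real.one_sub_le_exp_neg _) _
        _ = Real.exp (s * -(r / (8 * (q + 1)) : ℝ)) := (Real.exp_nat_mul _ _).symm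
        _ ≤ _ := by
          rw [Real.exp_le_exp, mul_neg, neg_le_neg_iff]
          calc 2 * L = 16 * ((q : ℝ) + 1) * L / r * (r / (8 * (q + 1))) := by
                field_simp
                norm_num
            _ ≤ _ := by gcongr
    have h2 : (q : ℝ) ^ 2 = Real.exp (2 * L) := by
      rw [hL, two_mul, Real.exp_add, Real.exp_log hqpos, sq]
    calc _ ≤ Real.exp (-(2 * L)) * (q : ℝ) ^ 2 := by gcongr
      _ = 1 := by rw [h2, ← Real.exp_add]; simp
  have hpow : (q ^ 2) ^ r * (q ^ 2 + 1) ^ s ≤ 2 ^ k := by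
    have h1 : (q ^ 2) ^ r * (q ^ 2 + 1) ^ s ≤ q ^ (3 * (r + s)) := by
      calc (q ^ 2) ^ r * (q ^ 2 + 1) ^ s ≤ (q ^ 3) ^ r * (q ^ 3) ^ s := by
            gcongr
            · omega
            · norm_num
            · nlinarith
        _ = _ := by rw [← pow_add, ← pow_mul]
    refine h1.trans ?_
    have h2 : (q : ℝ) ^ (3 * (r + s)) ≤ 2 ^ k := by
      rw [← Real.log_le_log_iff (by positivity) (by positivity), Real.log_pow, Real.log_pow]
      push_cast
      calc 3 * ((r : ℝ) + s) * L ≤ 3 * (2 * (Q * L) + 33 * (Q * L)) * L := by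
            gcongr
            nlinarith
        _ = 105 * (Q * L ^ 2) := by ring
        _ ≤ k * (1 / 2) := by
            have : 0 < Q * L ^ 2 := by positivity
            linarith
        _ ≤ k * Real.log 2 := by
            gcongr
            linarith [Real.log_two_gt_d9]
    exact_mod_cast h2
  have hM : 2 * (4 * (q + 1)) ≤ ⌈2 * (q : ℝ) ^ ((2 : ℝ) + 3 * δ / 2) / (k : ℝ)⌉₊ := by
    have h1 : (2 * (4 * (q + 1)) : ℝ) ≤ 2 * (q : ℝ) ^ ((2 : ℝ) + 3 * δ / 2) / (k : ℝ) := by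
      have hkr : (k : ℝ) ≤ q := by exact_mod_cast hkq
      rw [le_div_iff₀ hkpos, Real.rpow_add hqpos]
      calc (2 * (4 * (q + 1)) : ℝ) * k ≤ (2 * (4 * (2 * q))) * q := by
            gcongr
            linarith
        _ = 2 * ((q : ℝ) ^ (2 : ℝ) * 8) := by
            rw [Real.rpow_two]
            ring
        _ ≤ _ := by gcongr
    exact_mod_cast h1.trans (Nat.le_ceil _)
  calc numArcs F k ≤ (q ^ 2) ^ r * ((q ^ 2 + 1) ^ s * (4 * (q + 1)).choose k) :=
        numArcs_le k r s hrk hkq hshrink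
    _ = (q ^ 2) ^ r * (q ^ 2 + 1) ^ s * (4 * (q + 1)).choose k := by ring
    _ ≤ 2 ^ k * (4 * (q + 1)).choose k := Nat.mul_le_mul_right _ hpow
    _ ≤ (2 * (4 * (q + 1))).choose k := two_pow_mul_choose_le _ _
    _ ≤ _ := Nat.choose_le_choose _ hM
end

section
/- There exists an absolute constant c > 0 such that for every finite field F with q elements and every subset P ⊆ F² with |P| ≥ 4q, the number of collinear triples contained in P is at least c|P|³/q. -/
/-!
Fix `a ∈ P` and sort the other points of `P` by the direction of the line joining them to `a`.
There are only `q + 1` directions, so by Cauchy–Schwarz at least `(|P| - 1)² / (q + 1)` ordered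
pairs `(b, c)` of points of `P \ {a}` share a direction (`sq_card_le_mul_card_pairs`). At most
`|P| - 1` of these pairs have `b = c`; as `|P| ≥ 4q`, a positive proportion remains, each giving
a collinear triple `{a, b, c}`. Summing over `a` gives a constant times `|P|³ / q` ordered
triples, and each 3-element set arises from at most `3³ = 27` of them.
-/

open Finset MeasureTheory
open scoped NNReal ENNReal

/-- The direction of the line through `a` and `b`: its slope, or `none` if the line is vertical.
The value at `b = a` is the junk value `none`. -/
noncomputable def lineDirection {F : Type*} [Field F] (a b : F × F) : Option F :=
  open Classical in
  if b.1 = a.1 then none else some ((b.2 - a.2) / (b.1 - a.1))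

lemma collinear_of_lineDirection_eq {F : Type*} [Field F] {a b c : F × F} (hb : b ≠ a)
    (h : lineDirection a b = lineDirection a c) :
    Collinear F ({a, b, c} : Set (F × F)) := by
  rw [collinear_iff_of_mem (p₀ := a) (by simp)]
  refine ⟨b - a, ?_⟩
  intro p hp
  simp only [Set.mem_insert_iff, Set.mem_singleton_iff] at hp
  rcases hp with rfl | rfl | rfl
  · exact ⟨0, by simp⟩
  · exact ⟨1, by simp⟩
  · unfold lineDirection at h
    by_cases h1 : b.1 = a.1
    · by_cases h2 : p.1 = a.1
      · have h3 : b.2 - a.2 ≠ 0 := fun h3 => hb (Prod.ext h1 (sub_eq_zero.mp h3))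
        refine ⟨(p.2 - a.2) / (b.2 - a.2), Prod.ext ?_ ?_⟩
        · simp [h1, h2]
        · simp [div_mul_cancel₀ _ h3]
      · simp [h1, h2] at h
    · by_cases h2 : p.1 = a.1
      · simp [h1, h2] at h
      · have h3 : b.1 - a.1 ≠ 0 := sub_ne_zero.mpr h1
        have h4 : p.1 - a.1 ≠ 0 := sub_ne_zero.mpr h2
        simp only [h1, h2, if_false, Option.some.injEq] at h
        rw [div_eq_div_iff h3 h4] at h
        refine ⟨(p.1 - a.1) / (b.1 - a.1), Prod.ext ?_ ?_⟩
        · simp [div_mul_cancel₀ _ h3]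
        · simp only [vadd_eq_add, Prod.snd_add, Prod.smul_snd, Prod.snd_sub, smul_eq_mul]
          field_simp
          linear_combination -h

/-- Cauchy–Schwarz lower bound for the number of ordered pairs in `M` on which `f` agrees. -/
lemma sq_card_le_mul_card_pairs {α β : Type*} [DecidableEq β] [Fintype β]
    (M : Finset α) (f : α → β) :
    M.card ^ 2 ≤ Fintype.card β * ((M ×ˢ M).filter fun x => f x.1 = f x.2).card := by
  have h1 : M.card = ∑ d : β, (M.filter fun x => f x = d).card :=
    Finset.card_eq_sum_card_fiberwise (fun _ _ => Finset.mem_coe.mpr (Finset.mem_univ _))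
  have h2 : ((M ×ˢ M).filter fun x => f x.1 = f x.2).card
      = ∑ d : β, (M.filter fun x => f x = d).card ^ 2 := by
    rw [Finset.card_eq_sum_card_fiberwise (f := fun x : α × α => f x.1) (t := Finset.univ)
      (fun _ _ => Finset.mem_coe.mpr (Finset.mem_univ _))]
    refine Finset.sum_congr rfl fun d _ => ?_
    rw [sq, ← Finset.card_product]
    congr 1
    ext x
    simp only [Finset.mem_filter, Finset.mem_product]
    grind
  rw [h1, h2]
  exact sq_sum_le_card_mul_sum_sq

open Classical in
/-- Ordered pairs of distinct points of `P \ {a}` lying in the same direction from `a`. -/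
noncomputable def alignedPairs {F : Type*} [Field F] (P : Finset (F × F)) (a : F × F) :
    Finset ((F × F) × (F × F)) :=
  ((P.erase a) ×ˢ (P.erase a)).filter fun x =>
    lineDirection a x.1 = lineDirection a x.2 ∧ x.1 ≠ x.2

lemma sq_le_mul_card_alignedPairs {F : Type*} [Field F] [Fintype F] (P : Finset (F × F))
    (a : F × F) (ha : a ∈ P) :
    (P.card - 1) ^ 2 ≤ (Fintype.card F + 1) * ((alignedPairs P a).card + (P.card - 1)) := by
  classical
  have h := sq_card_le_mul_card_pairs (P.erase a) (lineDirection a)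
  rw [Finset.card_erase_of_mem ha, Fintype.card_option] at h
  refine h.trans (Nat.mul_le_mul_left _ ?_)
  rw [← Finset.card_erase_of_mem ha, ← Finset.diag_card (P.erase a)]
  refine (Finset.card_le_card ?_).trans (Finset.card_union_le _ _)
  intro x hx
  simp only [alignedPairs, Finset.mem_union, Finset.mem_filter, Finset.mem_product,
    Finset.mem_diag] at hx ⊢
  grind

lemma sum_card_alignedPairs_le {F : Type*} [Field F] [Fintype F] (P : Finset (F × F)) :
    ∑ a ∈ P, (alignedPairs P a).card ≤ 27 * numCollinearTriples F P := by
  classical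
  have hN : numCollinearTriples F P = (Finset.univ.filter fun s : Finset (F × F) =>
      s ⊆ P ∧ s.card = 3 ∧ Collinear F (↑s : Set (F × F))).card := by
    unfold numCollinearTriples
    rw [Nat.card_eq_fintype_card, Fintype.card_subtype]
  rw [hN, ← Finset.card_sigma]
  refine Finset.card_le_mul_card_image_of_maps_to
    (f := fun t : (Σ _ : F × F, (F × F) × (F × F)) => ({t.1, t.2.1, t.2.2} : Finset (F × F)))
    ?_ 27 ?_
  · rintro ⟨a, b, c⟩ ht
    simp only [alignedPairs, Finset.mem_sigma, Finset.mem_filter, Finset.mem_product,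
      Finset.mem_erase] at ht
    obtain ⟨ha, ⟨⟨hba, hb⟩, hca, hc⟩, hd, hbc⟩ := ht
    simp only [Finset.mem_filter, Finset.mem_univ, true_and]
    refine ⟨?_, Finset.card_eq_three.mpr ⟨a, b, c, hba.symm, hca.symm, hbc, rfl⟩, ?_⟩
    · intro x hx
      simp only [Finset.mem_insert, Finset.mem_singleton] at hx
      rcases hx with rfl | rfl | rfl <;> assumption
    · simpa using collinear_of_lineDirection_eq hba hd
  · intro s hs
    simp only [Finset.mem_filter, Finset.mem_univ, true_and] at hs
    -- Every triple mapping to `s` has its three entries in `s`.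
    have h27 : (s.sigma fun _ => s ×ˢ s).card = 27 := by
      simp [Finset.card_sigma, Finset.card_product, hs.2.1]
    rw [← h27]
    refine Finset.card_le_card ?_
    rintro ⟨a, b, c⟩ ht
    have hs' := (Finset.mem_filter.mp ht).2
    subst hs'
    simp

theorem supersaturation :
    ∃ c : ℝ, 0 < c ∧ ∀ (F : Type) [Field F] [Fintype F], ∀ P : Finset (F × F),
      4 * Fintype.card F ≤ P.card →
      c * (P.card : ℝ) ^ 3 / (Fintype.card F : ℝ) ≤ (numCollinearTriples F P : ℝ) := by
  refine ⟨1 / 100, by norm_num, ?_⟩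
  intro F _ _ P hP
  have hq : 2 ≤ Fintype.card F := Fintype.one_lt_card
  have hsum := sum_card_alignedPairs_le P
  have key := fun a ha => sq_le_mul_card_alignedPairs P a ha
  obtain ⟨m, hm⟩ : ∃ m, P.card = m + 1 := ⟨P.card - 1, by omega⟩
  have hqR : (2 : ℝ) ≤ Fintype.card F := by exact_mod_cast hq
  have hPR : 4 * (Fintype.card F : ℝ) ≤ P.card := by exact_mod_cast hP
  have hsumR : ∑ a ∈ P, ((alignedPairs P a).card : ℝ) ≤ 27 * (numCollinearTriples F P : ℝ) := by
    exact_mod_cast hsum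
  set q : ℝ := (Fintype.card F : ℝ) with hqdef
  set n : ℝ := (P.card : ℝ) with hndef
  have hq0 : 0 < q := by linarith
  have hlow : ∀ a ∈ P, (7 / 24) * n ^ 2 / q ≤ ((alignedPairs P a).card : ℝ) := by
    intro a ha
    have h := key a ha
    rw [hm, Nat.add_sub_cancel] at h
    have hR : (m : ℝ) ^ 2 ≤ (q + 1) * ((alignedPairs P a).card + m) := by
      rw [hqdef]; exact_mod_cast h
    have hmn : (m : ℝ) = n - 1 := by rw [hndef, hm]; push_cast; ring
    rw [hmn] at hR
    rw [div_le_iff₀ hq0]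
    -- `n ≥ 8` and `n ≥ 4q` give `n - 1 ≥ 7n/8` and `n - 2 - q ≥ n/2`, while `q + 1 ≤ 3q/2`.
    have h1 : (7 / 8 * n) * (n / 2) ≤ (n - 1) * (n - 2 - q) :=
      mul_le_mul (by linarith) (by linarith) (by linarith) (by linarith)
    have h2 : (q + 1) * ((alignedPairs P a).card : ℝ)
        ≤ (3 / 2 * q) * ((alignedPairs P a).card : ℝ) :=
      mul_le_mul_of_nonneg_right (by linarith) (Nat.cast_nonneg _)
    nlinarith
  have htot := Finset.card_nsmul_le_sum P _ _ hlow
  rw [nsmul_eq_mul, ← hndef] at htot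
  have h3 : n * (7 / 24 * n ^ 2 / q) = 7 / 24 * (n ^ 3 / q) := by ring
  have h4 : 0 ≤ n ^ 3 / q := by positivity
  have h5 : 1 / 100 * n ^ 3 / q = 1 / 100 * (n ^ 3 / q) := by ring
  rw [h3] at htot
  rw [h5]
  linarith
end

section
/- For every δ > 0 there exist a constant c(δ) > 0 and q₀ such that for every prime power q ≥ q₀ and every real t with 1/2 + 2δ ≤ t ≤ 1, there exists a family 𝒞 of subsets of F² satisfying: (i) |𝒞| ≤ 2^{c(δ) · q^{t−δ} · (log₂ q)²}; (ii) every C ∈ 𝒞 has |C| ≤ q^{2−t+3δ}; (iii) every arc P ⊆ F² is contained in some C ∈ 𝒞. -/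
/-!
The family produced does not depend on `t`: there are `2 ^ O(√q (log q)²)` containers, each of
size `O(q)`, which beats both bounds throughout the range `1/2 + 2δ ≤ t ≤ 1`.

Fix `r ≈ √q`. An arc `P` with at least `r` points contains an `r`-point arc `S`. Join two distinct
points of the plane outside `S` when they are collinear with some point of `S`; then `P \ S` is
independent in this graph. Each `s ∈ S` splits a set `A` of points into at most `q + 1` lines
through `s`, so by Cauchy–Schwarz it accounts for at least about `|A|² / q` adjacent ordered pairs
in `A`. A pair is counted by at most two elements of `S`, because `S` is an arc. Therefore every
`A` with `|A| ≥ 2(q + 1)` contains a vertex adjacent to at least `r |A| / (4(q + 1))` vertices of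
`A` (`exists_high_degree`). The Kleitman–Winston procedure (`kleitman_winston`) turns this into
containers of size `O(q)`: it selects `O((q / r) log q) = O(√q log q)` points. The choice of `S`
costs a further factor `q ^ (2r)`, and arcs with fewer than `r` points are covered by `r`-sets.
-/

open Finset MeasureTheory
open scoped NNReal ENNReal

/-! ### Kleitman–Winston containers -/

open scoped Classical in
/-- Kleitman–Winston containers for a relation `G` in which every large subset `A` of `U` has an
element related to at least `β |A|` elements of `A`. Here `k` bounds the number of selected
vertices: each selection shrinks the current set by the factor `1 - β`. -/
lemma kleitman_winston {V : Type*} (G : V → V → Prop) (U : Finset V) (β M : ℝ)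
    (hβ1 : β ≤ 1)
    (hG : ∀ A ⊆ U, M ≤ (#A : ℝ) → ∃ v ∈ A, β * #A ≤ #{u ∈ A | G v u}) :
    ∀ (n : ℕ) (A : Finset V) (k : ℕ), #A = n → A ⊆ U → (#A : ℝ) * (1 - β) ^ k < M →
      ∃ 𝒞 : Finset (Finset V), #𝒞 ≤ (#A + 1) ^ k ∧ (∀ C ∈ 𝒞, (#C : ℝ) ≤ M + k) ∧
        ∀ I ⊆ A, (∀ x ∈ I, ∀ y ∈ I, ¬ G x y) → ∃ C ∈ 𝒞, I ⊆ C := by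
  intro n
  induction n using Nat.strong_induction_on with
  | _ n ih =>
  intro A k hn hAU hk
  by_cases hM : (#A : ℝ) < M
  · refine ⟨{A}, ?_, ?_, ?_⟩
    · simpa using Nat.one_le_pow _ _ (Nat.succ_pos _)
    · intro C hC
      rw [Finset.mem_singleton] at hC
      subst hC
      have : (0 : ℝ) ≤ k := Nat.cast_nonneg k
      linarith
    · intro I hI _
      exact ⟨A, by simp, hI⟩
  · push Not at hM
    obtain ⟨v, hvA, hv⟩ := hG A hAU hM
    cases k with
    | zero => simp at hk; linarith
    | succ k =>
    set B := A.erase v with hB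
    set D := {u ∈ B | ¬ G v u} with hD
    have hBA : B ⊆ A := Finset.erase_subset _ _
    have hDB : D ⊆ B := Finset.filter_subset _ _
    have hBc : #B + 1 = #A := Finset.card_erase_add_one hvA
    have hDBc : #D ≤ #B := Finset.card_le_card hDB
    have hβ0 : 0 ≤ 1 - β := by linarith
    have hDc : (#D : ℝ) ≤ #A * (1 - β) := by
      have h1 : D ⊆ {u ∈ A | ¬ G v u} := Finset.filter_subset_filter _ hBA
      have h2 := Finset.card_le_card h1
      have h3 := Finset.card_filter_add_card_filter_not (s := A) (fun u => G v u)
      have h4 : (#D : ℝ) + #{u ∈ A | G v u} ≤ #A := by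
        exact_mod_cast (by omega : #D + #{u ∈ A | G v u} ≤ #A)
      linarith
    obtain ⟨𝒞₁, h11, h12, h13⟩ := ih (#B) (by omega) B (k + 1) rfl (hBA.trans hAU) (by
      refine lt_of_le_of_lt ?_ hk
      gcongr)
    obtain ⟨𝒞₂, h21, h22, h23⟩ := ih (#D) (by omega) D k rfl ((hDB.trans hBA).trans hAU) (by
      refine lt_of_le_of_lt ?_ hk
      rw [pow_succ']
      calc (#D : ℝ) * (1 - β) ^ k ≤ (#A * (1 - β)) * (1 - β) ^ k := by gcongr
        _ = _ := by ring)
    refine ⟨𝒞₁ ∪ 𝒞₂.image (fun C : Finset V => insert v C), ?_, ?_, ?_⟩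
    · calc #(𝒞₁ ∪ 𝒞₂.image (fun C : Finset V => insert v C))
          ≤ #𝒞₁ + #(𝒞₂.image (fun C : Finset V => insert v C)) := Finset.card_union_le _ _
        _ ≤ #𝒞₁ + #𝒞₂ := Nat.add_le_add_left Finset.card_image_le _
        _ ≤ #A ^ (k + 1) + #A ^ k := by
            gcongr
            · rwa [hBc] at h11
            · exact h21.trans (Nat.pow_le_pow_left (by omega) _)
        _ = #A ^ k * (#A + 1) := by ring
        _ ≤ (#A + 1) ^ k * (#A + 1) := by gcongr; omega
        _ = _ := by ring
    · intro C hC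
      rcases Finset.mem_union.1 hC with hC | hC
      · exact h12 C hC
      · obtain ⟨C', hC', rfl⟩ := Finset.mem_image.1 hC
        have h1 := h22 C' hC'
        have h2 : (#(insert v C') : ℝ) ≤ #C' + 1 := by exact_mod_cast Finset.card_insert_le _ _
        push_cast
        linarith
    · intro I hI hind
      by_cases hvI : v ∈ I
      · obtain ⟨C, hC, hIC⟩ := h23 (I.erase v) (by
          intro x hx
          have hx' := Finset.mem_erase.1 hx
          exact Finset.mem_filter.2 ⟨Finset.mem_erase.2 ⟨hx'.1, hI hx'.2⟩, hind v hvI x hx'.2⟩)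
          (fun x hx y hy => hind x (Finset.mem_of_mem_erase hx) y (Finset.mem_of_mem_erase hy))
        refine ⟨insert v C, Finset.mem_union_right _ (Finset.mem_image_of_mem _ hC), ?_⟩
        rw [← Finset.insert_erase hvI]
        exact Finset.insert_subset_insert _ hIC
      · obtain ⟨C, hC, hIC⟩ := h13 I (fun x hx => Finset.mem_erase.2
          ⟨fun h => hvI (h ▸ hx), hI hx⟩) hind
        exact ⟨C, Finset.mem_union_left _ hC, hIC⟩

/-! ### Collinear triples through points of an arc -/

open scoped Classical in
/-- The slope of the line joining `s` and `x`, with `none` for a vertical line (and for `x = s`). -/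
noncomputable def slopeFrom {F : Type*} [Field F] (s x : F × F) : Option F :=
  if x.1 = s.1 then none else some ((x.2 - s.2) / (x.1 - s.1))

lemma collinear_of_slope_eq {F : Type*} [Field F] (s x y : F × F) (hx : x ≠ s)
    (h : slopeFrom s x = slopeFrom s y) : Collinear F ({s, x, y} : Set (F × F)) := by
  rw [collinear_iff_of_mem (p₀ := s) (by simp)]
  refine ⟨x - s, ?_⟩
  have key : ∃ r : F, y = r • (x - s) + s := by
    unfold slopeFrom at h
    by_cases h1 : x.1 = s.1
    · by_cases h2 : y.1 = s.1
      · have h3 : x.2 - s.2 ≠ 0 := fun h3 => hx (Prod.ext h1 (sub_eq_zero.1 h3))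
        refine ⟨(y.2 - s.2) / (x.2 - s.2), Prod.ext ?_ ?_⟩
        · simp [h1, h2]
        · simp [h3]
      · simp [h1, h2] at h
    · by_cases h2 : y.1 = s.1
      · simp [h1, h2] at h
      · have h3 : x.1 - s.1 ≠ 0 := sub_ne_zero.2 h1
        have h4 : y.1 - s.1 ≠ 0 := sub_ne_zero.2 h2
        simp only [h1, h2, if_false, Option.some.injEq] at h
        refine ⟨(y.1 - s.1) / (x.1 - s.1), Prod.ext ?_ ?_⟩
        · simp [h3]
        · simp only [Prod.snd_add, Prod.smul_snd, Prod.snd_sub, smul_eq_mul]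
          field_simp at h ⊢
          linear_combination -h
  obtain ⟨r, hr⟩ := key
  intro p hp
  simp only [Set.mem_insert_iff, Set.mem_singleton_iff] at hp
  rcases hp with rfl | rfl | rfl
  · exact ⟨0, by simp⟩
  · exact ⟨1, by simp⟩
  · exact ⟨r, by simpa using hr⟩

open scoped Classical in
/-- Cauchy–Schwarz over the `q + 1` slopes through `s`. -/
lemma card_sq_le_pairs {F : Type*} [Field F] [Fintype F] (s : F × F) (A : Finset (F × F))
    (hs : s ∉ A) :
    #A ^ 2 ≤ (Fintype.card F + 1) *
      #{p ∈ A ×ˢ A | Collinear F ({s, p.1, p.2} : Set (F × F))} := by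
  have h1 : #A = ∑ o : Option F, #{x ∈ A | slopeFrom s x = o} :=
    Finset.card_eq_sum_card_fiberwise (fun _ _ => Finset.mem_coe.2 (Finset.mem_univ _))
  have h2 := sq_sum_le_card_mul_sum_sq (s := (Finset.univ : Finset (Option F)))
    (f := fun o => #{x ∈ A | slopeFrom s x = o})
  rw [← h1, Finset.card_univ, Fintype.card_option] at h2
  refine h2.trans (Nat.mul_le_mul_left _ ?_)
  have h3 : ∀ o : Option F, #{x ∈ A | slopeFrom s x = o} ^ 2 =
      #{p ∈ A ×ˢ A | slopeFrom s p.1 = o ∧ slopeFrom s p.2 = o} := by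
    intro o
    rw [sq, ← Finset.card_product]
    congr 1
    ext p
    simp only [Finset.mem_product, Finset.mem_filter]
    tauto
  simp_rw [h3]
  rw [← Finset.card_biUnion]
  · apply Finset.card_le_card
    intro p hp
    simp only [Finset.mem_biUnion, Finset.mem_univ, true_and, Finset.mem_filter,
      Finset.mem_product] at hp ⊢
    obtain ⟨o, hA, h4, h5⟩ := hp
    exact ⟨hA, collinear_of_slope_eq s p.1 p.2 (fun h => hs (h ▸ hA.1)) (h4.trans h5.symm)⟩
  · intro o _ o' _ hne
    simp only [Function.onFun]
    rw [Finset.disjoint_left]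
    intro p hp hp'
    simp only [Finset.mem_filter] at hp hp'
    exact hne (hp.2.1.symm.trans hp'.2.1)

open scoped Classical in
lemma card_on_line_le_two_s3 {F : Type*} [Field F] (S : Finset (F × F)) (hS : IsArc F ↑S)
    (v u : F × F) (huv : v ≠ u) :
    #{s ∈ S | Collinear F ({s, v, u} : Set (F × F))} ≤ 2 := by
  by_contra! h
  obtain ⟨a, b, c, ha, hb, hc, hab, hac, hbc⟩ := Finset.two_lt_card_iff.1 h
  simp only [Finset.mem_filter] at ha hb hc
  have key : ∀ s : F × F, Collinear F ({s, v, u} : Set (F × F)) → s ∈ line[F, v, u] :=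
    fun s hs => hs.mem_affineSpan_of_mem_of_ne (by simp) (by simp) (by simp) huv
  exact hS a ha.1 b hb.1 c hc.1 hab hac hbc
    (collinear_triple_of_mem_affineSpan_pair (key a ha.2) (key b hb.2) (key c hc.2))

open scoped Classical in
lemma exists_high_degree {F : Type*} [Field F] [Fintype F] (S A : Finset (F × F))
    (hS : IsArc F ↑S) (hSA : Disjoint S A)
    (hA : 2 * ((Fintype.card F : ℝ) + 1) ≤ #A) :
    ∃ v ∈ A, (#S : ℝ) / (4 * (Fintype.card F + 1)) * #A ≤
      #{u ∈ A | v ≠ u ∧ ∃ s ∈ S, Collinear F ({s, v, u} : Set (F × F))} := by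
  set q : ℝ := (Fintype.card F : ℝ) with hq
  have hq0 : 0 ≤ q := Nat.cast_nonneg _
  -- Each `s ∈ S` contributes `≥ |A|² / (2 (q + 1))` off-diagonal pairs.
  have h1 : ∀ s ∈ S, (#A : ℝ) ^ 2 / (2 * (q + 1)) ≤
      #{p ∈ A ×ˢ A | p.1 ≠ p.2 ∧ Collinear F ({s, p.1, p.2} : Set (F × F))} := by
    intro s hs
    have h2 := card_sq_le_pairs s A (Finset.disjoint_left.1 hSA hs)
    have h3 : #{p ∈ A ×ˢ A | Collinear F ({s, p.1, p.2} : Set (F × F))} ≤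
        #{p ∈ A ×ˢ A | p.1 ≠ p.2 ∧ Collinear F ({s, p.1, p.2} : Set (F × F))} + #A := by
      have h4 : #A.diag = #A := Finset.diag_card A
      rw [← h4]
      refine le_trans (Finset.card_le_card ?_) (Finset.card_union_le _ _)
      intro p hp
      simp only [Finset.mem_filter, Finset.mem_union, Finset.mem_diag, Finset.mem_product] at hp ⊢
      by_cases h : p.1 = p.2
      · exact Or.inr ⟨hp.1.1, h⟩
      · exact Or.inl ⟨hp.1, h, hp.2⟩
    have h5 : (#A : ℝ) ^ 2 ≤ (q + 1) *
        (#{p ∈ A ×ˢ A | p.1 ≠ p.2 ∧ Collinear F ({s, p.1, p.2} : Set (F × F))} + #A) := by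
      rw [hq]
      exact_mod_cast h2.trans (Nat.mul_le_mul_left _ h3)
    rw [div_le_iff₀ (by positivity)]
    have h6 : 2 * (q + 1) * #A ≤ (#A : ℝ) * #A := by gcongr
    nlinarith
  have hdc : ∑ s ∈ S, #{p ∈ A ×ˢ A | p.1 ≠ p.2 ∧ Collinear F ({s, p.1, p.2} : Set (F × F))} ≤
      2 * #{p ∈ A ×ˢ A | p.1 ≠ p.2 ∧ ∃ s ∈ S, Collinear F ({s, p.1, p.2} : Set (F × F))} := by
    simp only [Finset.card_filter _ (A ×ˢ A)]
    rw [Finset.sum_comm, Finset.mul_sum]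
    refine Finset.sum_le_sum fun p _ => ?_
    rw [← Finset.card_filter]
    by_cases hp : p.1 ≠ p.2 ∧ ∃ s ∈ S, Collinear F ({s, p.1, p.2} : Set (F × F))
    · rw [if_pos hp]
      simpa [hp.1] using card_on_line_le_two_s3 S hS p.1 p.2 hp.1
    · rw [if_neg hp, mul_zero, Nat.le_zero, Finset.card_eq_zero, Finset.filter_eq_empty_iff]
      exact fun s hs h => hp ⟨h.1, s, hs, h.2⟩
  have hdeg : #{p ∈ A ×ˢ A | p.1 ≠ p.2 ∧ ∃ s ∈ S, Collinear F ({s, p.1, p.2} : Set (F × F))} =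
      ∑ v ∈ A, #{u ∈ A | v ≠ u ∧ ∃ s ∈ S, Collinear F ({s, v, u} : Set (F × F))} := by
    simp_rw [Finset.card_filter]
    rw [Finset.sum_product]
  have hsum : (#S : ℝ) * ((#A : ℝ) ^ 2 / (2 * (q + 1))) ≤
      2 * ∑ v ∈ A, (#{u ∈ A | v ≠ u ∧ ∃ s ∈ S, Collinear F ({s, v, u} : Set (F × F))} : ℝ) := by
    calc (#S : ℝ) * ((#A : ℝ) ^ 2 / (2 * (q + 1)))
        = ∑ s ∈ S, ((#A : ℝ) ^ 2 / (2 * (q + 1))) := by rw [Finset.sum_const, nsmul_eq_mul]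
      _ ≤ ∑ s ∈ S, (#{p ∈ A ×ˢ A | p.1 ≠ p.2 ∧
            Collinear F ({s, p.1, p.2} : Set (F × F))} : ℝ) := Finset.sum_le_sum h1
      _ ≤ _ := by
        rw [hdeg] at hdc
        exact_mod_cast hdc
  have hne : A.Nonempty := by
    rw [← Finset.card_pos]
    have : (0 : ℝ) < #A := by linarith
    exact_mod_cast this
  apply Finset.exists_le_of_sum_le hne
  rw [Finset.sum_const, nsmul_eq_mul]
  have : (#A : ℝ) * (#S / (4 * (q + 1)) * #A) = (#S * ((#A : ℝ) ^ 2 / (2 * (q + 1)))) / 2 := by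
    field_simp
    ring
  rw [this]
  linarith

/-! ### Containers for arcs -/

open scoped Classical in
/-- Containers for the arcs that contain a fixed set `S` or are contained in it. If `S` is not an
arc, no arc contains it, and `{S}` suffices. -/
lemma containers_over {F : Type*} [Field F] [Fintype F] (S : Finset (F × F)) (k : ℕ)
    (hS4 : (#S : ℝ) ≤ 4 * (Fintype.card F + 1))
    (hk : (Fintype.card F : ℝ) ^ 2 * (1 - #S / (4 * ((Fintype.card F : ℝ) + 1))) ^ k <
      2 * (Fintype.card F + 1)) :
    ∃ 𝒞 : Finset (Finset (F × F)), #𝒞 ≤ 1 + (Fintype.card F ^ 2 + 1) ^ k ∧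
      (∀ C ∈ 𝒞, (#C : ℝ) ≤ #S + (2 * (Fintype.card F + 1) + k)) ∧
      ∀ P : Finset (F × F), IsArc F ↑P → (P ⊆ S ∨ S ⊆ P) → ∃ C ∈ 𝒞, P ⊆ C := by
  set q : ℝ := (Fintype.card F : ℝ) with hq
  have hq0 : 0 ≤ q := Nat.cast_nonneg _
  by_cases hS : IsArc F (↑S : Set (F × F))
  · have hβ1 : (#S : ℝ) / (4 * (q + 1)) ≤ 1 := by
      rw [div_le_one (by positivity)]
      exact hS4
    have hUle : #(Finset.univ \ S) ≤ Fintype.card F ^ 2 := by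
      refine (Finset.card_le_univ _).trans ?_
      rw [Fintype.card_prod, sq]
    obtain ⟨𝒞, h1, h2, h3⟩ := kleitman_winston
      (fun v u => v ≠ u ∧ ∃ s ∈ S, Collinear F ({s, v, u} : Set (F × F))) (Finset.univ \ S)
      (#S / (4 * (q + 1))) (2 * (q + 1)) hβ1
      (fun A hA hM => by
        convert exists_high_degree S A hS
          (Finset.disjoint_left.2 fun x hx hxA => (Finset.mem_sdiff.1 (hA hxA)).2 hx) hM)
      _ (Finset.univ \ S) k rfl subset_rfl (by
        refine lt_of_le_of_lt ?_ hk
        have : 0 ≤ 1 - (#S : ℝ) / (4 * (q + 1)) := by linarith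
        have h' : (#(Finset.univ \ S) : ℝ) ≤ q ^ 2 := by rw [hq]; exact_mod_cast hUle
        gcongr)
    refine ⟨insert S (𝒞.image (S ∪ ·)), ?_, ?_, ?_⟩
    · have h4 : (#(Finset.univ \ S) + 1) ^ k ≤ (Fintype.card F ^ 2 + 1) ^ k := by gcongr
      have h5 := Finset.card_insert_le S (𝒞.image (S ∪ ·))
      have h6 : #(𝒞.image (S ∪ ·)) ≤ #𝒞 := Finset.card_image_le
      omega
    · intro C hC
      rcases Finset.mem_insert.1 hC with rfl | hC
      · have : (0 : ℝ) ≤ k := Nat.cast_nonneg _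
        linarith
      · obtain ⟨C', hC', rfl⟩ := Finset.mem_image.1 hC
        have h4 : (#(S ∪ C') : ℝ) ≤ #S + #C' := by exact_mod_cast Finset.card_union_le _ _
        have h5 := h2 C' hC'
        linarith
    · rintro P hP (hPS | hSP)
      · exact ⟨S, Finset.mem_insert_self _ _, hPS⟩
      · obtain ⟨C, hC, hPC⟩ := h3 (P \ S) (Finset.sdiff_subset_sdiff (Finset.subset_univ _)
          subset_rfl) (by
          rintro x hx y hy ⟨hxy, s, hs, hcol⟩
          rw [Finset.mem_sdiff] at hx hy
          exact hP s (hSP hs) x hx.1 y hy.1 (fun h => hx.2 (h ▸ hs)) (fun h => hy.2 (h ▸ hs))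
            hxy hcol)
        refine ⟨S ∪ C, Finset.mem_insert_of_mem (Finset.mem_image_of_mem _ hC), ?_⟩
        rw [← Finset.union_sdiff_of_subset hSP]
        exact Finset.union_subset_union subset_rfl hPC
  · refine ⟨{S}, ?_, ?_, ?_⟩
    · simp
    · intro C hC
      rw [Finset.mem_singleton] at hC
      subst hC
      have : (0 : ℝ) ≤ k := Nat.cast_nonneg _
      linarith
    · rintro P hP (hPS | hSP)
      · exact ⟨S, Finset.mem_singleton_self _, hPS⟩
      · exact absurd (fun a ha b hb c hc => hP a (hSP ha) b (hSP hb) c (hSP hc)) hS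

/-- Containers for all arcs, with the parameters `r` (size of `S`) and `k` still free. -/
lemma containers_all {F : Type*} [Field F] [Fintype F] (r k : ℕ)
    (hr : r ≤ Fintype.card F ^ 2)
    (hS4 : (r : ℝ) ≤ 4 * (Fintype.card F + 1))
    (hk : (Fintype.card F : ℝ) ^ 2 * (1 - r / (4 * ((Fintype.card F : ℝ) + 1))) ^ k <
      2 * (Fintype.card F + 1)) :
    ∃ 𝒞 : Finset (Finset (F × F)),
      #𝒞 ≤ (Fintype.card F ^ 2) ^ r * (1 + (Fintype.card F ^ 2 + 1) ^ k) ∧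
      (∀ C ∈ 𝒞, (#C : ℝ) ≤ r + (2 * (Fintype.card F + 1) + k)) ∧
      ∀ P : Set (F × F), IsArc F P → ∃ C ∈ 𝒞, P ⊆ ↑C := by
  classical
  have hex : ∀ S : Finset (F × F), ∃ 𝒞 : Finset (Finset (F × F)), #S = r →
      (#𝒞 ≤ 1 + (Fintype.card F ^ 2 + 1) ^ k ∧
      (∀ C ∈ 𝒞, (#C : ℝ) ≤ r + (2 * (Fintype.card F + 1) + k)) ∧
      ∀ P : Finset (F × F), IsArc F ↑P → (P ⊆ S ∨ S ⊆ P) → ∃ C ∈ 𝒞, P ⊆ C) := by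
    intro S
    by_cases hS : #S = r
    · subst hS
      obtain ⟨𝒞, h⟩ := containers_over S k hS4 hk
      exact ⟨𝒞, fun _ => h⟩
    · exact ⟨∅, fun h => absurd h hS⟩
  choose f hf using hex
  have hV : #(Finset.univ : Finset (F × F)) = Fintype.card F ^ 2 := by
    rw [Finset.card_univ, Fintype.card_prod, sq]
  refine ⟨(Finset.powersetCard r Finset.univ).biUnion f, ?_, ?_, ?_⟩
  · refine (Finset.card_biUnion_le_card_mul _ _ _
      (fun S hS => (hf S (Finset.mem_powersetCard.1 hS).2).1)).trans ?_
    gcongr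
    rw [Finset.card_powersetCard, hV]
    exact Nat.choose_le_pow _ _
  · intro C hC
    obtain ⟨S, hS, hC⟩ := Finset.mem_biUnion.1 hC
    exact (hf S (Finset.mem_powersetCard.1 hS).2).2.1 C hC
  · intro P hP
    have hPc : (↑P.toFinset : Set (F × F)) = P := Set.coe_toFinset P
    obtain ⟨S, hS, hor⟩ : ∃ S : Finset (F × F), #S = r ∧ (P.toFinset ⊆ S ∨ S ⊆ P.toFinset) := by
      rcases le_total r (#P.toFinset) with h | h
      · obtain ⟨S, h1, h2⟩ := Finset.exists_subset_card_eq h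
        exact ⟨S, h2, Or.inr h1⟩
      · obtain ⟨S, h1, _, h2⟩ := Finset.exists_subsuperset_card_eq
          (Finset.subset_univ P.toFinset) h (hr.trans hV.ge)
        exact ⟨S, h2, Or.inl h1⟩
    obtain ⟨C, hC, hPC⟩ := (hf S hS).2.2 P.toFinset (by rwa [hPc]) hor
    refine ⟨C, Finset.mem_biUnion.2 ⟨S, Finset.mem_powersetCard.2 ⟨Finset.subset_univ _, hS⟩, hC⟩,
      ?_⟩
    rw [← hPc]
    exact_mod_cast hPC

/-- Containers with the parameters chosen as `r = ⌊√q⌋ + 1` and `k = ⌈16 √q log q⌉`. -/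
lemma containers_sqrt {F : Type*} [Field F] [Fintype F] :
    ∃ 𝒞 : Finset (Finset (F × F)),
      (#𝒞 : ℝ) ≤ 2 ^ (56 * √(Fintype.card F : ℝ) * (Real.logb 2 (Fintype.card F)) ^ 2) ∧
      (∀ C ∈ 𝒞, (#C : ℝ) ≤ 40 * Fintype.card F) ∧
      ∀ P : Set (F × F), IsArc F P → ∃ C ∈ 𝒞, P ⊆ ↑C := by
  have hn2 : 2 ≤ Fintype.card F := Fintype.one_lt_card
  set n := Fintype.card F with hn
  set q : ℝ := (n : ℝ) with hq
  have hq2 : (2 : ℝ) ≤ q := by rw [hq]; exact_mod_cast hn2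
  have hq0 : 0 < q := by linarith
  set w : ℝ := √q with hw
  have hww : w * w = q := Real.mul_self_sqrt hq0.le
  have hw1 : 1 ≤ w := by rw [hw, Real.one_le_sqrt]; linarith
  set l : ℝ := Real.log q with hl
  have hl0 : 0 ≤ l := Real.log_nonneg (by linarith)
  have hlw : l ≤ 2 * w := by
    have h1 : Real.log w ≤ w - 1 := Real.log_le_sub_one_of_pos (by linarith)
    have h2 : l = Real.log w + Real.log w := by
      rw [hl, ← hww, Real.log_mul (by positivity) (by positivity)]
    linarith
  set L : ℝ := Real.logb 2 q with hL
  have hL1 : 1 ≤ L := by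
    rw [hL, Real.le_logb_iff_rpow_le (by norm_num) hq0]
    simpa using hq2
  have hlL : l ≤ L := by
    have h2 : Real.log 2 ≤ 1 := by linarith [Real.log_two_lt_d9]
    have h3 : 0 < Real.log 2 := Real.log_pos (by norm_num)
    rw [hL, Real.logb, le_div_iff₀ h3]
    nlinarith
  set r : ℕ := ⌊w⌋₊ + 1 with hr
  set k : ℕ := ⌈16 * w * l⌉₊ with hk
  have hr1 : w < r := by rw [hr]; exact_mod_cast Nat.lt_floor_add_one w
  have hr2 : (r : ℝ) ≤ 2 * w := by
    have := Nat.floor_le (a := w) (by linarith)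
    rw [hr]; push_cast; linarith
  have hk1 : 16 * w * l ≤ k := Nat.le_ceil _
  have hk2 : (k : ℝ) ≤ 16 * w * l + 1 := (Nat.ceil_lt_add_one (by positivity)).le
  have hr4 : (r : ℝ) ≤ 4 * (q + 1) := by nlinarith
  have hrn : r ≤ n ^ 2 := by
    have : (r : ℝ) ≤ (n : ℝ) ^ 2 := by
      rw [← hq]
      nlinarith
    exact_mod_cast this
  have hdecay : q ^ 2 * (1 - r / (4 * (q + 1))) ^ k < 2 * (q + 1) := by
    have hβ0 : 0 ≤ 1 - (r : ℝ) / (4 * (q + 1)) := by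
      rw [sub_nonneg, div_le_one (by positivity)]
      exact hr4
    have h1 : (1 - (r : ℝ) / (4 * (q + 1))) ^ k ≤ Real.exp (-(2 * l)) := by
      calc (1 - (r : ℝ) / (4 * (q + 1))) ^ k
          ≤ (Real.exp (-((r : ℝ) / (4 * (q + 1))))) ^ k := by
            gcongr
            exact Real.one_sub_le_exp_neg _
        _ = Real.exp (k * (-((r : ℝ) / (4 * (q + 1))))) := by rw [Real.exp_nat_mul]
        _ ≤ Real.exp (-(2 * l)) := by
            rw [Real.exp_le_exp, mul_neg, neg_le_neg_iff, ← mul_div_assoc,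
              le_div_iff₀ (by positivity)]
            -- `k r ≥ 16 w l · w = 16 q l`, while `4 (q + 1) ≤ 8 q`.
            calc 2 * l * (4 * (q + 1)) ≤ 16 * w * l * w := by nlinarith
              _ ≤ k * r := by gcongr
    have h2 : Real.exp (-(2 * l)) = (q ^ 2)⁻¹ := by
      rw [Real.exp_neg, two_mul, Real.exp_add, hl, Real.exp_log hq0, sq]
    rw [h2] at h1
    calc q ^ 2 * (1 - r / (4 * (q + 1))) ^ k ≤ q ^ 2 * (q ^ 2)⁻¹ := by gcongr
      _ = 1 := mul_inv_cancel₀ (by positivity)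
      _ < _ := by linarith
  obtain ⟨𝒞, h1, h2, h3⟩ := containers_all (F := F) r k hrn hr4 hdecay
  refine ⟨𝒞, ?_, ?_, h3⟩
  · have h4 : #𝒞 ≤ n ^ (2 * r + (3 * k + 1)) := by
      refine h1.trans ?_
      rw [pow_add n, pow_mul n 2 r]
      gcongr
      have h5 : n ^ 2 + 1 ≤ n ^ 3 := by nlinarith [sq_nonneg n]
      have h6 : (n ^ 2 + 1) ^ k ≤ n ^ (3 * k) := by
        rw [pow_mul]; gcongr
      have h7 : 1 ≤ n ^ (3 * k) := Nat.one_le_pow _ _ (by omega)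
      calc 1 + (n ^ 2 + 1) ^ k ≤ n ^ (3 * k) * 2 := by omega
        _ ≤ n ^ (3 * k) * n := by gcongr
        _ = n ^ (3 * k + 1) := (pow_succ _ _).symm
    have h5 : (#𝒞 : ℝ) ≤ q ^ (2 * r + (3 * k + 1)) := by rw [hq]; exact_mod_cast h4
    refine h5.trans ?_
    have h6 : q = 2 ^ L := (Real.rpow_logb (by norm_num) (by norm_num) hq0).symm
    rw [← Real.rpow_natCast]
    conv_lhs => rw [h6]
    rw [← Real.rpow_mul (by norm_num)]
    apply Real.rpow_le_rpow_of_exponent_le (by norm_num)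
    push_cast
    have h7 : w * l ≤ w * L := by gcongr
    have h8 : w ≤ w * L := le_mul_of_one_le_right (by linarith) hL1
    have h9 : 2 * (r : ℝ) + (3 * k + 1) ≤ 56 * w * L := by nlinarith
    calc L * (2 * (r : ℝ) + (3 * k + 1)) ≤ L * (56 * w * L) := by gcongr
      _ = _ := by ring
  · intro C hC
    refine (h2 C hC).trans ?_
    have : w * l ≤ w * (2 * w) := by gcongr
    nlinarith

theorem container_lemma :
    ∀ δ : ℝ, 0 < δ → ∃ c : ℝ, 0 < c ∧ ∃ q₀ : ℕ,
      ∀ (F : Type) [Field F] [Fintype F], q₀ ≤ Fintype.card F →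
      ∀ t : ℝ, 1 / 2 + 2 * δ ≤ t → t ≤ 1 →
      ∃ 𝒞 : Finset (Finset (F × F)),
        (𝒞.card : ℝ) ≤
          2 ^ (c * (Fintype.card F : ℝ) ^ (t - δ) *
            (Real.logb 2 (Fintype.card F)) ^ 2) ∧
        (∀ C ∈ 𝒞, (C.card : ℝ) ≤ (Fintype.card F : ℝ) ^ (2 - t + 3 * δ)) ∧
        (∀ P : Set (F × F), IsArc F P → ∃ C ∈ 𝒞, P ⊆ ↑C) := by
  intro δ hδ
  have hev : ∀ᶠ n : ℕ in Filter.atTop, (40 : ℝ) ≤ (n : ℝ) ^ (3 * δ) :=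
    ((tendsto_rpow_atTop (by positivity : 0 < 3 * δ)).comp
      tendsto_natCast_atTop_atTop).eventually_ge_atTop 40
  obtain ⟨q₀, hq₀⟩ := Filter.eventually_atTop.1 hev
  refine ⟨56, by norm_num, q₀, ?_⟩
  intro F _ _ hF t ht1 ht2
  obtain ⟨𝒞, h1, h2, h3⟩ := containers_sqrt (F := F)
  have hq1 : (1 : ℝ) ≤ Fintype.card F := by exact_mod_cast Fintype.card_pos (α := F)
  have h40 := hq₀ _ hF
  refine ⟨𝒞, h1.trans ?_, fun C hC => (h2 C hC).trans ?_, h3⟩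
  · apply Real.rpow_le_rpow_of_exponent_le (by norm_num)
    rw [Real.sqrt_eq_rpow]
    gcongr
    linarith
  · calc (40 : ℝ) * Fintype.card F
        ≤ (Fintype.card F : ℝ) ^ (3 * δ) * Fintype.card F := by gcongr
      _ = (Fintype.card F : ℝ) ^ (3 * δ + 1) := by
          rw [Real.rpow_add_one (by linarith)]
      _ ≤ _ := Real.rpow_le_rpow_of_exponent_le hq1 (by linarith)
end
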